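/- Fix integers k1 ≥ 2, k2 ≥ 2 and set k := min{k1,k2}. Fix reals ε > 0 and C1 > max{k1,k2} + ε. Then there exists a constant C > 0 such that for all positive integers N and M with (max{k1,k2} + ε)·N ≤ M ≤ C1·N, the number of (k1,k2)-dicores on vertex set {1,…,N} with M edges that are NOT k-strongly connected is at most C · N^{-(k-1)} times the total number of (k1,k2)-dicores on {1,…,N} with M edges. Equivalently, a uniformly random (k1,k2)-dicore with N vertices and M edges is k-strongly connected with probability 1 − O(N^{-(k-1)}). -/

import Mathlib

/-- A `(k1,k2)`-dicore on vertex set `Fin N` with `M` edges: a simple digraph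
(edges are ordered pairs of distinct vertices; a `Finset` has no repeated edges)
with exactly `M` edges, minimum in-degree `≥ k1` and minimum out-degree `≥ k2`. -/
def IsDicore (k1 k2 N M : ℕ) (E : Finset (Fin N × Fin N)) : Prop :=
  E.card = M ∧ (∀ e ∈ E, e.1 ≠ e.2) ∧
    ∀ v : Fin N,
      k1 ≤ (E.filter (fun e => e.2 = v)).card ∧
      k2 ≤ (E.filter (fun e => e.1 = v)).card

/-- A digraph on `N` vertices is `k`-strongly connected if `N > k` and, for every
set `T` of fewer than `k` vertices, every ordered pair of remaining vertices is
joined by a directed path avoiding `T`. -/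
def KStronglyConnected {N : ℕ} (k : ℕ) (E : Finset (Fin N × Fin N)) : Prop :=
  k < N ∧ ∀ T : Finset (Fin N), T.card < k →
    ∀ u v : Fin N, u ∉ T → v ∉ T →
      Relation.ReflTransGen (fun a b => a ∉ T ∧ b ∉ T ∧ (a, b) ∈ E) u v

namespace Dicore

open Finset
open scoped Classical

/-- Double counting of moves from `X` to `Y`, each move being reversible. -/
lemma card_mul_le_of_moves {α β γ δ : Type*} (X : Finset α) (Y : Finset γ)
    (mv : α → Finset β) (bk : γ → Finset δ) (φ : α → β → γ) (ψ : α → β → δ) (F B : ℝ)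
    (hF : ∀ x ∈ X, F ≤ ((mv x).card : ℝ)) (hB : ∀ y ∈ Y, ((bk y).card : ℝ) ≤ B)
    (hY : ∀ x ∈ X, ∀ m ∈ mv x, φ x m ∈ Y) (hbk : ∀ x ∈ X, ∀ m ∈ mv x, ψ x m ∈ bk (φ x m))
    (hinj : ∀ x ∈ X, ∀ m ∈ mv x, ∀ x' ∈ X, ∀ m' ∈ mv x',
      φ x m = φ x' m' → ψ x m = ψ x' m' → x = x' ∧ m = m') :
    (X.card : ℝ) * F ≤ (Y.card : ℝ) * B := by
  have h1 : (X.card : ℝ) * F ≤ ((X.sigma mv).card : ℝ) := by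
    rw [card_sigma]; push_cast
    calc (X.card : ℝ) * F = ∑ x ∈ X, F := by simp
      _ ≤ _ := sum_le_sum hF
  have h2 : ((Y.sigma bk).card : ℝ) ≤ (Y.card : ℝ) * B := by
    rw [card_sigma]; push_cast
    calc _ ≤ ∑ x ∈ Y, B := sum_le_sum hB
      _ = _ := by simp
  have h3 : (X.sigma mv).card ≤ (Y.sigma bk).card := by
    apply card_le_card_of_injOn (fun p : Sigma (fun _ : α => β) =>
      (⟨φ p.1 p.2, ψ p.1 p.2⟩ : Sigma (fun _ : γ => δ)))
    · rintro ⟨x, m⟩ hp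
      simp only [coe_sigma, Set.mem_sigma_iff, mem_coe] at hp ⊢
      exact ⟨hY x hp.1 m hp.2, hbk x hp.1 m hp.2⟩
    · rintro ⟨x, m⟩ hp ⟨x', m'⟩ hp' h
      simp only [coe_sigma, Set.mem_sigma_iff, mem_coe] at hp hp'
      simp only [Sigma.mk.injEq, heq_eq_eq] at h
      obtain ⟨rfl, rfl⟩ := hinj x hp.1 m hp.2 x' hp'.1 m' hp'.2 h.1 h.2
      rfl
  have h3' : ((X.sigma mv).card : ℝ) ≤ ((Y.sigma bk).card : ℝ) := by exact_mod_cast h3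
  linarith

variable {N : ℕ}

/-- Number of edges leaving vertices of `Z`. -/
def outV (E : Finset (Fin N × Fin N)) (Z : Finset (Fin N)) : ℕ :=
  (E.filter (fun e => e.1 ∈ Z)).card

/-- Number of edges entering vertices of `Z`. -/
def inV (E : Finset (Fin N × Fin N)) (Z : Finset (Fin N)) : ℕ :=
  (E.filter (fun e => e.2 ∈ Z)).card

/-- The finset of all dicores. -/
noncomputable def dicores (k1 k2 N M : ℕ) : Finset (Finset (Fin N × Fin N)) :=
  univ.filter (IsDicore k1 k2 N M)

lemma mem_dicores {k1 k2 N M : ℕ} {E : Finset (Fin N × Fin N)} :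
    E ∈ dicores k1 k2 N M ↔ IsDicore k1 k2 N M E := by simp [dicores]

/-- Reversal of all edges. -/
def rev (E : Finset (Fin N × Fin N)) : Finset (Fin N × Fin N) :=
  E.map (Equiv.prodComm _ _).toEmbedding

lemma mem_rev {E : Finset (Fin N × Fin N)} {e : Fin N × Fin N} : e ∈ rev E ↔ e.swap ∈ E := by
  simp only [rev, mem_map_equiv, Equiv.prodComm_symm, Equiv.prodComm_apply]

@[simp] lemma rev_rev (E : Finset (Fin N × Fin N)) : rev (rev E) = E := by
  ext e; simp [mem_rev]

lemma rev_injective : Function.Injective (rev (N := N)) :=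
  Function.LeftInverse.injective rev_rev

lemma card_rev (E : Finset (Fin N × Fin N)) : (rev E).card = E.card := by simp [rev]

lemma card_filter_rev (E : Finset (Fin N × Fin N)) (P : Fin N × Fin N → Prop)
    [DecidablePred P] :
    ((rev E).filter P).card = (E.filter (fun e => P e.swap)).card := by
  rw [rev, filter_map, card_map]
  rfl

lemma inV_rev (E : Finset (Fin N × Fin N)) (Z : Finset (Fin N)) : inV (rev E) Z = outV E Z := by
  unfold inV outV
  exact card_filter_rev E (fun e => e.2 ∈ Z)

lemma outV_rev (E : Finset (Fin N × Fin N)) (Z : Finset (Fin N)) : outV (rev E) Z = inV E Z := by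
  unfold inV outV
  exact card_filter_rev E (fun e => e.1 ∈ Z)

lemma isDicore_rev {k1 k2 M : ℕ} {E : Finset (Fin N × Fin N)} (h : IsDicore k1 k2 N M E) :
    IsDicore k2 k1 N M (rev E) := by
  refine ⟨by rw [card_rev, h.1], fun e he => (h.2.1 _ (mem_rev.1 he)).symm, fun v => ?_⟩
  have h1 := card_filter_rev E (fun e => e.2 = v)
  have h2 := card_filter_rev E (fun e => e.1 = v)
  have := h.2.2 v
  constructor
  · calc k2 ≤ _ := this.2
      _ = _ := h1.symm
  · calc k1 ≤ _ := this.1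
      _ = _ := h2.symm

lemma outV_singleton (E : Finset (Fin N × Fin N)) (v : Fin N) :
    outV E {v} = (E.filter (fun e => e.1 = v)).card := by simp [outV]

lemma inV_singleton (E : Finset (Fin N × Fin N)) (v : Fin N) :
    inV E {v} = (E.filter (fun e => e.2 = v)).card := by simp [inV]

lemma inV_eq_sum (E : Finset (Fin N × Fin N)) (Z : Finset (Fin N)) :
    inV E Z = ∑ v ∈ Z, inV E {v} := by
  unfold inV
  rw [card_eq_sum_card_fiberwise (s := E.filter (fun e => e.2 ∈ Z)) (f := Prod.snd) (t := Z)
    (fun e he => by simpa using (mem_filter.1 he).2)]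
  refine sum_congr rfl fun v hv => ?_
  congr 1; ext e; simp only [mem_filter, mem_singleton]
  constructor
  · rintro ⟨⟨a, -⟩, b⟩; exact ⟨a, b⟩
  · rintro ⟨a, b⟩; exact ⟨⟨a, b ▸ hv⟩, b⟩

lemma IsDicore.mul_card_le_inV {k1 k2 M : ℕ} {E : Finset (Fin N × Fin N)}
    (h : IsDicore k1 k2 N M E) (Z : Finset (Fin N)) : k1 * Z.card ≤ inV E Z := by
  rw [inV_eq_sum, mul_comm]
  calc Z.card * k1 = ∑ v ∈ Z, k1 := by simp
    _ ≤ _ := sum_le_sum fun v _ => by rw [inV_singleton]; exact (h.2.2 v).1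

/-! ### Exchanging the heads of two edges -/

/-- Replace the edges `(u, v)` and `(x, y)` by `(x, v)` and `(u, y)`. -/
def exchange (E : Finset (Fin N × Fin N)) (u v x y : Fin N) : Finset (Fin N × Fin N) :=
  insert (x, v) (insert (u, y) ((E.erase (u, v)).erase (x, y)))

/-- The exchange of the heads of `(u, v)` and `(x, y)` is possible. -/
structure Exchangeable (E : Finset (Fin N × Fin N)) (u v x y : Fin N) : Prop where
  mem₁ : (u, v) ∈ E
  mem₂ : (x, y) ∈ E
  not₁ : (x, v) ∉ E
  not₂ : (u, y) ∉ E

namespace Exchangeable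

variable {E : Finset (Fin N × Fin N)} {u v x y : Fin N}

lemma ne_tail (h : Exchangeable E u v x y) : u ≠ x := by
  rintro rfl; exact h.not₁ h.mem₁

lemma ne_head (h : Exchangeable E u v x y) : v ≠ y := by
  rintro rfl; exact h.not₁ h.mem₂

lemma mem_exchange {e : Fin N × Fin N} :
    e ∈ exchange E u v x y ↔ e = (x, v) ∨ e = (u, y) ∨ (e ∈ E ∧ e ≠ (u, v) ∧ e ≠ (x, y)) := by
  simp only [exchange, mem_insert, mem_erase]
  tauto

lemma symm (h : Exchangeable E u v x y) : Exchangeable (exchange E u v x y) x v u y := by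
  have h1 := h.ne_tail
  have h2 := h.ne_head
  constructor <;> rw [mem_exchange] <;> simp [h1, h2, h1.symm, h2.symm]

lemma exchange_exchange (h : Exchangeable E u v x y) :
    exchange (exchange E u v x y) x v u y = E := by
  ext e
  rw [mem_exchange, mem_exchange]
  have h1 := h.mem₁
  have h2 := h.mem₂
  have h3 := h.not₁
  have h4 := h.not₂
  constructor
  · rintro (rfl | rfl | ⟨(rfl | rfl | h), h5, h6⟩) <;> tauto
  · intro he
    by_cases e1 : e = (u, v)
    · exact Or.inl e1
    by_cases e2 : e = (x, y)
    · exact Or.inr (Or.inl e2)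
    refine Or.inr (Or.inr ⟨Or.inr (Or.inr ⟨he, e1, e2⟩), ?_, ?_⟩) <;> rintro rfl <;> tauto

lemma sum_exchange (h : Exchangeable E u v x y) (g : Fin N × Fin N → ℕ) :
    ∑ e ∈ exchange E u v x y, g e + (g (u, v) + g (x, y)) =
      ∑ e ∈ E, g e + (g (x, v) + g (u, y)) := by
  have h1 := h.ne_tail
  have h2 := h.ne_head
  have m1 := h.mem₁
  have m2 := h.mem₂
  have m3 := h.not₁
  have m4 := h.not₂
  rw [exchange, sum_insert, sum_insert]
  · have a := Finset.add_sum_erase E g m1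
    have b := Finset.add_sum_erase (E.erase (u, v)) g (a := (x, y))
      (by simp [m2, h1.symm])
    omega
  · simp [m4]
  · simp [m3, h1.symm]

lemma card_exchange (h : Exchangeable E u v x y) : (exchange E u v x y).card = E.card := by
  have := h.sum_exchange (fun _ => 1)
  simpa using this

lemma card_filter_exchange (h : Exchangeable E u v x y) (P : Fin N × Fin N → Prop)
    [DecidablePred P] :
    ((exchange E u v x y).filter P).card +
        ((if P (u, v) then 1 else 0) + (if P (x, y) then 1 else 0)) =
      (E.filter P).card + ((if P (x, v) then 1 else 0) + (if P (u, y) then 1 else 0)) := by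
  have := h.sum_exchange (fun e => if P e then 1 else 0)
  simpa only [card_filter] using this

lemma outV_exchange (h : Exchangeable E u v x y) (Z : Finset (Fin N)) :
    outV (exchange E u v x y) Z = outV E Z := by
  have := h.card_filter_exchange (fun e => e.1 ∈ Z)
  simp only at this
  unfold outV
  omega

lemma inV_exchange (h : Exchangeable E u v x y) (Z : Finset (Fin N)) :
    inV (exchange E u v x y) Z = inV E Z := by
  have := h.card_filter_exchange (fun e => e.2 ∈ Z)
  simp only at this
  unfold inV
  omega

lemma isDicore_exchange {k1 k2 M : ℕ} (h : Exchangeable E u v x y) (hxv : x ≠ v) (huy : u ≠ y)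
    (hE : IsDicore k1 k2 N M E) : IsDicore k1 k2 N M (exchange E u v x y) := by
  refine ⟨by rw [h.card_exchange, hE.1], fun e he => ?_, fun w => ?_⟩
  · rcases mem_exchange.1 he with rfl | rfl | h3
    · exact hxv
    · exact huy
    · exact hE.2.1 e h3.1
  · rw [← inV_singleton, ← outV_singleton, h.inV_exchange, h.outV_exchange, inV_singleton,
      outV_singleton]
    exact hE.2.2 w

end Exchangeable

/-- Sets of at most `s * N` vertices are incident with at most `t * N` edges in each direction. -/
def Reg (s t : ℝ) (E : Finset (Fin N × Fin N)) : Prop :=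
  ∀ Z : Finset (Fin N), (Z.card : ℝ) ≤ s * N → (outV E Z : ℝ) ≤ t * N ∧ (inV E Z : ℝ) ≤ t * N

lemma Exchangeable.reg_exchange {E : Finset (Fin N × Fin N)} {u v x y : Fin N} {s t : ℝ}
    (h : Exchangeable E u v x y) (hE : Reg s t E) : Reg s t (exchange E u v x y) := fun Z hZ => by
  rw [h.outV_exchange, h.inV_exchange]; exact hE Z hZ

/-! ### Tails of the degree distribution -/

lemma card_filter_insert_erase {E : Finset (Fin N × Fin N)} {e n : Fin N × Fin N} (he : e ∈ E)
    (hn : n ∉ E) (P : Fin N × Fin N → Prop) [DecidablePred P] :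
    ((insert n (E.erase e)).filter P).card + (if P e then 1 else 0) =
      (E.filter P).card + (if P n then 1 else 0) := by
  have h := Finset.add_sum_erase E (fun e => if P e then 1 else 0) he
  rw [card_filter, card_filter, sum_insert (by simp [hn])]
  omega

lemma inV_univ (E : Finset (Fin N × Fin N)) : inV E univ = E.card := by simp [inV]

lemma card_heavy_le {E : Finset (Fin N × Fin N)} {c : ℕ} (hN : 0 < N) (hE : E.card ≤ c * N) :
    (univ.filter (fun y : Fin N => N < 2 * inV E {y})).card ≤ 2 * c := by
  have h1 : (univ.filter (fun y : Fin N => N < 2 * inV E {y})).card * N ≤ 2 * E.card := by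
    calc _ = ∑ y ∈ univ.filter (fun y : Fin N => N < 2 * inV E {y}), N := by simp
      _ ≤ ∑ y ∈ univ.filter (fun y : Fin N => N < 2 * inV E {y}), 2 * inV E {y} :=
        sum_le_sum fun y hy => (mem_filter.1 hy).2.le
      _ ≤ ∑ y, 2 * inV E {y} := sum_le_univ_sum_of_nonneg (fun _ => Nat.zero_le _)
      _ = 2 * E.card := by rw [← mul_sum, ← inV_eq_sum, inV_univ]
  have h2 : (univ.filter (fun y : Fin N => N < 2 * inV E {y})).card * N ≤ (2 * c) * N := by
    calc _ ≤ _ := h1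
      _ ≤ 2 * (c * N) := by omega
      _ = _ := by ring
  exact Nat.le_of_mul_le_mul_right h2 hN

lemma outV_le_mul {E : Finset (Fin N × Fin N)} {Z : Finset (Fin N)} {k : ℕ}
    (h : ∀ v ∈ Z, outV E {v} ≤ k) : outV E Z ≤ k * Z.card := by
  rw [← inV_rev, inV_eq_sum, mul_comm]
  calc _ ≤ ∑ v ∈ Z, k := sum_le_sum fun v hv => by rw [inV_rev]; exact h v hv
    _ = _ := by simp

lemma outV_level_step {k1 k2 M c : ℕ} (hN : 0 < N) (hM : M ≤ c * N) (A : Finset (Fin N))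
    (hA : (A.card : ℝ) + N / 2 + 1 ≤ N) (m : ℕ) :
    (((dicores k1 k2 N M).filter (fun E => outV E A = m + 1)).card : ℝ) *
        (((m : ℝ) + 1 - (k2 + 2 * c) * A.card) * (N - A.card - N / 2 - 1)) ≤
      (((dicores k1 k2 N M).filter (fun E => outV E A = m)).card : ℝ) * (M * A.card) := by
  set light : Finset (Fin N × Fin N) → Finset (Fin N × Fin N) := fun E =>
    E.filter (fun e => e.1 ∈ A ∧ k2 < outV E {e.1} ∧ ¬ N < 2 * inV E {e.2}) with hlight
  set free : Finset (Fin N × Fin N) → (Fin N × Fin N) → Finset (Fin N) := fun E e =>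
    univ.filter (fun x => x ∉ A ∧ x ≠ e.2 ∧ (x, e.2) ∉ E) with hfree
  apply card_mul_le_of_moves (β := Sigma (fun _ : Fin N × Fin N => Fin N)) _ _
    (fun E => (light E).sigma (fun e => free E e)) (fun E => E ×ˢ A)
    (fun E m => insert (m.2, m.1.2) (E.erase m.1)) (fun E m => ((m.2, m.1.2), m.1.1))
  · intro E hE
    obtain ⟨hE, hEm⟩ := mem_filter.1 hE
    rw [mem_dicores] at hE
    have h1 : (m : ℝ) + 1 - (k2 + 2 * c) * A.card ≤ ((light E).card : ℝ) := by
      have e1 : outV E A ≤ (light E).card + (outV E (A.filter (fun v => ¬ k2 < outV E {v})) +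
          (A ×ˢ (univ.filter (fun y : Fin N => N < 2 * inV E {y}))).card) := by
        refine le_trans (card_le_card (t := light E ∪
          (E.filter (fun e => e.1 ∈ A.filter (fun v => ¬ k2 < outV E {v})) ∪
            A ×ˢ (univ.filter (fun y : Fin N => N < 2 * inV E {y})))) ?_) ((card_union_le _ _).trans
          (Nat.add_le_add_left (card_union_le _ _) _))
        intro e he
        simp only [mem_filter, mem_union, mem_product, mem_univ, true_and, hlight] at he ⊢
        tauto
      have e2 : outV E (A.filter (fun v => ¬ k2 < outV E {v})) ≤ k2 * A.card :=
        (outV_le_mul fun v hv => not_lt.1 (mem_filter.1 hv).2).trans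
          (Nat.mul_le_mul_left _ (card_filter_le _ _))
      have e3 : (A ×ˢ (univ.filter (fun y : Fin N => N < 2 * inV E {y}))).card ≤
          A.card * (2 * c) := by
        rw [card_product]
        exact Nat.mul_le_mul_left _ (card_heavy_le hN (hE.1.trans_le hM))
      have e4 : m + 1 ≤ (light E).card + (k2 * A.card + A.card * (2 * c)) := by omega
      have e5 : (m : ℝ) + 1 ≤ (light E).card + (k2 * A.card + A.card * (2 * c)) := by
        exact_mod_cast e4
      linarith
    have h2 : ∀ e ∈ light E, (N : ℝ) - A.card - N / 2 - 1 ≤ ((free E e).card : ℝ) := by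
      intro e he
      simp only [hlight, mem_filter] at he
      have e1 : N ≤ (free E e).card + (A.card + (1 + inV E {e.2})) := by
        have : (univ : Finset (Fin N)) ⊆ free E e ∪ (A ∪ ({e.2} ∪
            (E.filter (fun f => f.2 ∈ ({e.2} : Finset (Fin N)))).image Prod.fst)) := by
          intro x _
          simp only [hfree, mem_filter, mem_union, mem_univ, true_and, mem_singleton, mem_image]
          by_cases h1 : x ∈ A
          · tauto
          by_cases h2 : x = e.2
          · tauto
          by_cases h3 : (x, e.2) ∈ E
          · exact Or.inr (Or.inr (Or.inr ⟨(x, e.2), ⟨h3, rfl⟩, rfl⟩))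
          · tauto
        have h := card_le_card this
        rw [card_univ, Fintype.card_fin] at h
        refine h.trans ((card_union_le _ _).trans (Nat.add_le_add_left
          ((card_union_le _ _).trans (Nat.add_le_add_left ((card_union_le _ _).trans ?_) _)) _))
        rw [card_singleton]
        exact Nat.add_le_add_left card_image_le _
      have e2 : (N : ℝ) ≤ (free E e).card + (A.card + (1 + inV E {e.2})) := by exact_mod_cast e1
      have e3 : 2 * (inV E {e.2} : ℝ) ≤ N := by exact_mod_cast not_lt.1 he.2.2.2
      linarith
    rw [card_sigma]; push_cast
    have h3 : (0 : ℝ) ≤ N - A.card - N / 2 - 1 := by linarith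
    calc _ ≤ ((light E).card : ℝ) * (N - A.card - N / 2 - 1) := mul_le_mul_of_nonneg_right h1 h3
      _ = ∑ e ∈ light E, ((N : ℝ) - A.card - N / 2 - 1) := by
        rw [sum_const, nsmul_eq_mul]
      _ ≤ _ := sum_le_sum h2
  · intro E hE
    obtain ⟨hE, hEm⟩ := mem_filter.1 hE
    rw [mem_dicores] at hE
    rw [card_product, hE.1]; push_cast; rfl
  · rintro E hE ⟨⟨v, y⟩, x⟩ hm
    obtain ⟨hE, hEm⟩ := mem_filter.1 hE
    rw [mem_dicores] at hE
    simp only [mem_sigma, hlight, hfree, mem_filter, mem_univ, true_and] at hm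
    obtain ⟨⟨hvy, hvA, hk, -⟩, hxA, hxy, hxyE⟩ := hm
    have key := fun (P : Fin N × Fin N → Prop) (i : DecidablePred P) =>
      card_filter_insert_erase hvy hxyE P
    dsimp only
    rw [mem_filter, mem_dicores]
    refine ⟨⟨?_, ?_, fun w => ⟨?_, ?_⟩⟩, ?_⟩
    · have := key (fun _ => True) inferInstance
      simp only [filter_true, if_true] at this
      have := hE.1
      omega
    · intro e he
      rcases mem_insert.1 he with rfl | he
      · exact hxy
      · exact hE.2.1 e (mem_of_mem_erase he)
    · have := key (fun e => e.2 = w) inferInstance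
      have := (hE.2.2 w).1
      simp only at *
      omega
    · have h1 := key (fun e => e.1 = w) inferInstance
      have h2 := (hE.2.2 w).2
      rw [outV_singleton] at hk
      simp only at *
      by_cases hw : v = w
      · subst hw; simp only [if_true] at h1; omega
      · simp only [if_neg hw] at h1; omega
    · have h1 := key (fun e => e.1 ∈ A) inferInstance
      unfold outV at hEm ⊢
      simp only [if_pos hvA, if_neg hxA] at h1
      omega
  · rintro E hE ⟨⟨v, y⟩, x⟩ hm
    simp only [mem_sigma, hlight, mem_filter] at hm
    simp [hm.1.2.1]
  · rintro E hE ⟨⟨v, y⟩, x⟩ hm E' hE' ⟨⟨v', y'⟩, x'⟩ hm' h1 h2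
    simp only [Prod.mk.injEq] at h2
    obtain ⟨⟨rfl, rfl⟩, rfl⟩ := h2
    simp only [mem_sigma, hlight, hfree, mem_filter, mem_univ, true_and] at hm hm'
    refine ⟨?_, rfl⟩
    dsimp only at h1
    have h3 := congrArg (fun F => insert (v, y) (F.erase (x, y))) h1
    rwa [erase_insert (by simp [hm.2.2.2]), erase_insert (by simp [hm'.2.2.2]),
      insert_erase hm.1.1, insert_erase hm'.1.1] at h3

/-- Geometric decay of the number of edges leaving a fixed small set. -/
lemma outV_tail {k1 k2 M c Q : ℕ} (hN : 8 ≤ N) (hM : M ≤ c * N) (A : Finset (Fin N))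
    (hA1 : 0 < A.card) (hA : 8 * A.card ≤ N) (j : ℕ) :
    (((dicores k1 k2 N M).filter
        (fun E => outV E A = (k2 + 2 * c + 8 * c * Q) * A.card + j)).card : ℝ) * (Q : ℝ) ^ j ≤
      ((dicores k1 k2 N M).card : ℝ) := by
  induction j with
  | zero =>
    rw [pow_zero, mul_one]
    exact_mod_cast card_filter_le _ _
  | succ j ih =>
    refine le_trans ?_ ih
    have hN' : (8 : ℝ) ≤ N := by exact_mod_cast hN
    have hA' : 8 * (A.card : ℝ) ≤ N := by exact_mod_cast hA
    have hA1' : (0 : ℝ) < A.card := by exact_mod_cast hA1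
    have hM' : (M : ℝ) ≤ c * N := by exact_mod_cast hM
    have h := outV_level_step (k1 := k1) (k2 := k2) (by omega) hM A (by linarith)
      ((k2 + 2 * c + 8 * c * Q) * A.card + j)
    rw [← add_assoc]
    set x : ℝ := (((dicores k1 k2 N M).filter
        (fun E => outV E A = (k2 + 2 * c + 8 * c * Q) * A.card + j + 1)).card : ℝ)
    set y : ℝ := (((dicores k1 k2 N M).filter
        (fun E => outV E A = (k2 + 2 * c + 8 * c * Q) * A.card + j)).card : ℝ)
    have hx : 0 ≤ x := Nat.cast_nonneg _
    have hy : 0 ≤ y := Nat.cast_nonneg _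
    have h1 : x * ((8 * c * Q * A.card) * (N / 8)) ≤ y * (c * N * A.card) := by
      refine le_trans (mul_le_mul_of_nonneg_left ?_ hx) (h.trans (mul_le_mul_of_nonneg_left ?_ hy))
      · apply mul_le_mul
        · push_cast
          have : (0:ℝ) ≤ j := Nat.cast_nonneg _
          linarith
        · linarith
        · positivity
        · push_cast
          have : (0:ℝ) ≤ j := Nat.cast_nonneg _
          have : (0:ℝ) ≤ 8 * c * Q * A.card := by positivity
          linarith
      · exact mul_le_mul_of_nonneg_right hM' hA1'.le
    have hxy : x * Q ≤ y := by
      rcases Nat.eq_zero_or_pos c with rfl | hc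
      · have hM0 : M = 0 := by omega
        have : x = 0 := by
          simp only [x, Nat.cast_eq_zero, card_eq_zero, filter_eq_empty_iff]
          intro E hE hc
          have h1 := (mem_dicores.1 hE).1
          have h2 : outV E A ≤ E.card := card_filter_le _ _
          omega
        rw [this]; simpa using hy
      · have hc' : (0 : ℝ) < c := by exact_mod_cast hc
        have : (x * Q) * (c * N * A.card) ≤ y * (c * N * A.card) := by
          calc _ = x * ((8 * c * Q * A.card) * (N / 8)) := by ring
            _ ≤ _ := h1
        exact le_of_mul_le_mul_right this (by positivity)
    calc x * (Q : ℝ) ^ (j + 1) = (x * Q) * (Q : ℝ) ^ j := by ring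
      _ ≤ y * (Q : ℝ) ^ j := mul_le_mul_of_nonneg_right hxy (by positivity)

/-! ### Rare properties of dicores -/

/-- The union bound. -/
lemma card_filter_le_sum {α ι : Type*} (D : Finset α) {P : α → Prop} {_ : DecidablePred P}
    (I : Finset ι) {R : ι → α → Prop} [∀ i, DecidablePred (R i)] {f : ι → ℝ}
    (hcov : ∀ E ∈ D, P E → ∃ i ∈ I, R i E) (hf : ∀ i ∈ I, ((D.filter (R i)).card : ℝ) ≤ f i) :
    ((D.filter P).card : ℝ) ≤ ∑ i ∈ I, f i := by
  refine le_trans ?_ (sum_le_sum hf)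
  have h : (D.filter P).card ≤ ∑ i ∈ I, (D.filter (R i)).card := by
    refine le_trans (card_le_card ?_) card_biUnion_le
    intro E hE
    simp only [mem_filter, mem_biUnion] at hE ⊢
    obtain ⟨i, hi, h⟩ := hcov E hE.1 hE.2
    exact ⟨i, hi, hE.1, h⟩
  exact_mod_cast h

/-- The union bound for two properties. -/
lemma card_filter_le_add {α : Type*} (D : Finset α) {P R S : α → Prop} {_ : DecidablePred P}
    [DecidablePred R] [DecidablePred S] (hcov : ∀ E ∈ D, P E → R E ∨ S E) :
    ((D.filter P).card : ℝ) ≤ (D.filter R).card + (D.filter S).card := by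
  have h : D.filter P ⊆ D.filter R ∪ D.filter S := fun E hE => by
    simp only [mem_filter, mem_union] at hE ⊢
    have := hcov E hE.1 hE.2
    tauto
  exact_mod_cast (card_le_card h).trans (card_union_le _ _)

/-- A property of digraphs that holds with probability `O(N ^ (-q))` in a random dicore. -/
def Rare (k1 k2 c q : ℕ) (P : ∀ N : ℕ, Finset (Fin N × Fin N) → Prop) : Prop :=
  ∃ C : ℝ, 0 < C ∧ ∀ N M : ℕ, 0 < N → 2 * N ≤ M → M ≤ c * N →
    (((dicores k1 k2 N M).filter (P N)).card : ℝ) * (N : ℝ) ^ q ≤ C * (dicores k1 k2 N M).card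

section Rare

variable {k1 k2 c q : ℕ} {P P' : ∀ N : ℕ, Finset (Fin N × Fin N) → Prop}

lemma Rare.mono (h : Rare k1 k2 c q P)
    (hP : ∀ N M E, IsDicore k1 k2 N M E → P' N E → P N E) : Rare k1 k2 c q P' := by
  obtain ⟨C, hC, h⟩ := h
  refine ⟨C, hC, fun N M hN h1 h2 => le_trans ?_ (h N M hN h1 h2)⟩
  refine mul_le_mul_of_nonneg_right ?_ (by positivity)
  exact_mod_cast card_le_card fun E hE => by
    simp only [mem_filter] at hE ⊢
    exact ⟨hE.1, hP N M E (mem_dicores.1 hE.1) hE.2⟩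

lemma Rare.or (h : Rare k1 k2 c q P) (h' : Rare k1 k2 c q P') :
    Rare k1 k2 c q (fun N E => P N E ∨ P' N E) := by
  obtain ⟨C, hC, h⟩ := h
  obtain ⟨C', hC', h'⟩ := h'
  refine ⟨C + C', by positivity, fun N M hN h1 h2 => ?_⟩
  refine le_trans (mul_le_mul_of_nonneg_right
    (card_filter_le_add _ fun E _ hE => hE) (by positivity)) ?_
  linarith [h N M hN h1 h2, h' N M hN h1 h2]

lemma Rare.reverse (h : Rare k2 k1 c q P) : Rare k1 k2 c q (fun N E => P N (rev E)) := by
  obtain ⟨C, hC, h⟩ := h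
  refine ⟨C, hC, fun N M hN h1 h2 => ?_⟩
  have key : ∀ (k1 k2 : ℕ) (P : Finset (Fin N × Fin N) → Prop),
      ((dicores k1 k2 N M).filter P).card ≤
        ((dicores k2 k1 N M).filter (fun E => P (rev E))).card := by
    intro k1 k2 P
    apply card_le_card_of_injOn rev
    · intro E hE
      simp only [coe_filter, Set.mem_ofPred_eq, mem_dicores, rev_rev] at hE ⊢
      exact ⟨isDicore_rev hE.1, hE.2⟩
    · exact rev_injective.injOn
  have e1 := key k1 k2 (fun E => P N (rev E))
  simp only [rev_rev] at e1
  have e2 := key k2 k1 (fun _ => True)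
  simp only [filter_true] at e2
  calc _ ≤ (((dicores k2 k1 N M).filter (P N)).card : ℝ) * (N : ℝ) ^ q :=
        mul_le_mul_of_nonneg_right (by exact_mod_cast e1) (by positivity)
    _ ≤ C * (dicores k2 k1 N M).card := h N M hN h1 h2
    _ ≤ _ := mul_le_mul_of_nonneg_left (by exact_mod_cast e2) hC.le

/-- It suffices to bound the probability for large `N`. -/
lemma Rare.of_large (N0 : ℕ) (b : ℕ → ℝ) (C : ℝ)
    (hb : ∀ N : ℕ, N0 ≤ N → b N * (N : ℝ) ^ q ≤ C)
    (h : ∀ N M : ℕ, N0 ≤ N → 0 < N → 2 * N ≤ M → M ≤ c * N →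
      (((dicores k1 k2 N M).filter (P N)).card : ℝ) ≤ b N * (dicores k1 k2 N M).card) :
    Rare k1 k2 c q P := by
  refine ⟨|C| + (N0 : ℝ) ^ q + 1, by positivity, fun N M hN h1 h2 => ?_⟩
  have hD : (0 : ℝ) ≤ (dicores k1 k2 N M).card := Nat.cast_nonneg _
  rcases le_total N0 N with hN0 | hN0
  · calc _ ≤ (b N * (dicores k1 k2 N M).card) * (N : ℝ) ^ q :=
          mul_le_mul_of_nonneg_right (h N M hN0 hN h1 h2) (by positivity)
      _ = (b N * (N : ℝ) ^ q) * (dicores k1 k2 N M).card := by ring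
      _ ≤ _ := by
        refine mul_le_mul_of_nonneg_right ?_ hD
        have : (0 : ℝ) ≤ (N0 : ℝ) ^ q := by positivity
        linarith [hb N hN0, le_abs_self C]
  · have e1 : (((dicores k1 k2 N M).filter (P N)).card : ℝ) ≤ (dicores k1 k2 N M).card := by
      exact_mod_cast card_filter_le _ _
    have e2 : (N : ℝ) ^ q ≤ (N0 : ℝ) ^ q :=
      pow_le_pow_left₀ (Nat.cast_nonneg _) (by exact_mod_cast hN0) _
    calc _ ≤ ((dicores k1 k2 N M).card : ℝ) * (N0 : ℝ) ^ q := by gcongr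
      _ = (N0 : ℝ) ^ q * (dicores k1 k2 N M).card := by ring
      _ ≤ _ := by
        refine mul_le_mul_of_nonneg_right ?_ hD
        linarith [abs_nonneg C]

end Rare

/-- Exponential decay beats polynomial growth. -/
lemma exists_pow_mul_pow_le (j : ℕ) {b : ℝ} (hb0 : 0 ≤ b) (hb1 : b < 1) :
    ∃ C : ℝ, 0 < C ∧ ∀ n : ℕ, (n : ℝ) ^ j * b ^ n ≤ C := by
  have h := (tendsto_pow_const_mul_const_pow_of_lt_one j hb0 hb1).bddAbove_range
  obtain ⟨C, hC⟩ := h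
  exact ⟨|C| + 1, by positivity, fun n => by
    have := hC ⟨n, rfl⟩
    simp only at this
    linarith [le_abs_self C]⟩

/-! ### Regularity -/

lemma Reg.mono {s s' t : ℝ} {E : Finset (Fin N × Fin N)} (h : Reg s t E) (hs : s' ≤ s) :
    Reg s' t E := fun Z hZ => h Z (hZ.trans (mul_le_mul_of_nonneg_right hs (Nat.cast_nonneg _)))

lemma exists_rare_outV (k1 k2 c q : ℕ) {κ : ℝ} (hκ : 0 < κ) : ∃ s : ℝ, 0 < s ∧
    Rare k1 k2 c q (fun N E => ∃ Z : Finset (Fin N), (Z.card : ℝ) ≤ s * N ∧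
      κ * N < (outV E Z : ℝ)) := by
  obtain ⟨p, hp⟩ := exists_nat_ge (2 / κ)
  set Q : ℕ := 4 ^ p with hQ
  set K : ℕ := k2 + 2 * c + 8 * c * Q + 1 with hK
  have hK0 : (0 : ℝ) < K := by positivity
  obtain ⟨C, hC0, hC⟩ := exists_pow_mul_pow_le (q + 1) (b := 1 / 2) (by norm_num) (by norm_num)
  refine ⟨min (κ / (2 * K)) (1 / 8), by positivity, ?_⟩
  apply Rare.of_large 8 (fun N => (c + 1) * N * (1 / 2) ^ N) ((c + 1) * C)
  · intro N _
    calc _ = (c + 1) * ((N : ℝ) ^ (q + 1) * (1 / 2) ^ N) := by ring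
      _ ≤ _ := mul_le_mul_of_nonneg_left (hC N) (by positivity)
  intro N M hN8 hN _ hM
  set D := dicores k1 k2 N M with hD
  have hN' : (0 : ℝ) < N := by exact_mod_cast hN
  have step2 : ∀ i ∈ (univ : Finset (Finset (Fin N))) ×ˢ range (M + 1),
      ((D.filter (fun E => (i.1.card : ℝ) ≤ min (κ / (2 * K)) (1 / 8) * N ∧ κ * N < (i.2 : ℝ) ∧
        outV E i.1 = i.2)).card : ℝ) ≤ (1 / 4) ^ N * D.card := by
    rintro ⟨Z, m⟩ -
    by_cases hh : (Z.card : ℝ) ≤ min (κ / (2 * K)) (1 / 8) * N ∧ κ * N < (m : ℝ) ∧ 0 < Z.card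
    · obtain ⟨h1, h2, h3⟩ := hh
      have h1a : (Z.card : ℝ) ≤ κ / (2 * K) * N :=
        h1.trans (mul_le_mul_of_nonneg_right (min_le_left _ _) hN'.le)
      have h1b : (Z.card : ℝ) ≤ 1 / 8 * N :=
        h1.trans (mul_le_mul_of_nonneg_right (min_le_right _ _) hN'.le)
      have h1c : 8 * Z.card ≤ N := by
        have : (8 : ℝ) * Z.card ≤ N := by linarith
        exact_mod_cast this
      have h4 : (K : ℝ) * Z.card ≤ κ * N / 2 := by
        calc (K : ℝ) * Z.card ≤ K * (κ / (2 * K) * N) := by gcongr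
          _ = _ := by field_simp
      have h4' : (((k2 + 2 * c + 8 * c * Q) * Z.card : ℕ) : ℝ) ≤ κ * N / 2 := by
        refine le_trans ?_ h4
        exact_mod_cast Nat.mul_le_mul_right _ (by omega)
      have h5 : (k2 + 2 * c + 8 * c * Q) * Z.card ≤ m := by
        have : (((k2 + 2 * c + 8 * c * Q) * Z.card : ℕ) : ℝ) ≤ m := by nlinarith
        exact_mod_cast this
      obtain ⟨j, rfl⟩ := Nat.exists_eq_add_of_le h5
      have h6 : κ * N / 2 ≤ j := by
        rw [Nat.cast_add] at h2; linarith
      have h7 : N ≤ p * j := by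
        have : (N : ℝ) ≤ p * j := by
          calc (N : ℝ) = 2 / κ * (κ * N / 2) := by field_simp
            _ ≤ p * j := by gcongr
        exact_mod_cast this
      have h8 := outV_tail (k1 := k1) (k2 := k2) (Q := Q) hN8 hM Z h3 h1c j
      have h9 : (4 : ℝ) ^ N ≤ (Q : ℝ) ^ j := by
        rw [hQ]; push_cast; rw [← pow_mul]
        exact pow_le_pow_right₀ (by norm_num) h7
      have h10 : ((D.filter (fun E => outV E Z =
          (k2 + 2 * c + 8 * c * Q) * Z.card + j)).card : ℝ) * 4 ^ N ≤ D.card :=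
        le_trans (mul_le_mul_of_nonneg_left h9 (Nat.cast_nonneg _)) h8
      have h11 : ((D.filter (fun E => outV E Z =
          (k2 + 2 * c + 8 * c * Q) * Z.card + j)).card : ℝ) ≤ (1 / 4) ^ N * D.card := by
        rw [one_div, inv_pow, ← div_eq_inv_mul, le_div_iff₀ (by positivity)]
        exact h10
      refine le_trans ?_ h11
      exact_mod_cast card_le_card fun E hE => by
        simp only [mem_filter] at hE ⊢
        exact ⟨hE.1, hE.2.2.2⟩
    · rw [filter_false_of_mem, card_empty]
      · simp only [Nat.cast_zero]; positivity
      · rintro E - ⟨h1, h2, h3⟩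
        refine hh ⟨h1, h2, Nat.pos_of_ne_zero fun h0 => ?_⟩
        rw [card_eq_zero] at h0
        dsimp only at h0 h2 h3
        rw [h0] at h3
        simp only [outV, notMem_empty, filter_false, card_empty] at h3
        rw [← h3] at h2
        have : 0 < κ * N := by positivity
        simp only [Nat.cast_zero] at h2
        linarith
  have hM' : ((M + 1 : ℕ) : ℝ) ≤ (c + 1) * N := by
    have : M + 1 ≤ (c + 1) * N := by nlinarith
    exact_mod_cast this
  refine (card_filter_le_sum D _ ?_ step2).trans ?_
  · rintro E hE ⟨Z, h1, h2⟩
    refine ⟨⟨Z, outV E Z⟩, ?_, h1, h2, rfl⟩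
    have : outV E Z ≤ M := (mem_dicores.1 hE).1 ▸ card_filter_le _ _
    simp only [mem_product, mem_univ, true_and, mem_range]
    omega
  calc ∑ i ∈ (univ : Finset (Finset (Fin N))) ×ˢ range (M + 1), (1 / 4 : ℝ) ^ N * D.card
    _ = 2 ^ N * ((M + 1 : ℕ) : ℝ) * ((1 / 4 : ℝ) ^ N * D.card) := by
      rw [sum_const, nsmul_eq_mul, card_product, card_range, card_univ, Fintype.card_finset,
        Fintype.card_fin]
      push_cast; ring
    _ ≤ 2 ^ N * ((c + 1) * N) * ((1 / 4 : ℝ) ^ N * D.card) := by gcongr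
    _ = (c + 1) * N * (2 * (1 / 4)) ^ N * D.card := by rw [mul_pow]; ring
    _ = _ := by norm_num

/-- Random dicores are regular. -/
lemma exists_rare_not_reg (k1 k2 c q : ℕ) {κ : ℝ} (hκ : 0 < κ) : ∃ s : ℝ, 0 < s ∧
    Rare k1 k2 c q (fun _ E => ¬ Reg s κ E) := by
  obtain ⟨s, hs, h⟩ := exists_rare_outV k1 k2 c q hκ
  obtain ⟨s', hs', h'⟩ := exists_rare_outV k2 k1 c q hκ
  refine ⟨min s s', lt_min hs hs', (h.or h'.reverse).mono fun N M E _ hE => ?_⟩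
  simp only [Reg, not_forall] at hE
  obtain ⟨Z, hZ, hE⟩ := hE
  rw [not_and_or, not_le, not_le] at hE
  refine hE.imp (fun hE => ⟨Z, hZ.trans ?_, hE⟩) (fun hE => ⟨Z, hZ.trans ?_, ?_⟩)
  · exact mul_le_mul_of_nonneg_right (min_le_left _ _) (Nat.cast_nonneg _)
  · exact mul_le_mul_of_nonneg_right (min_le_right _ _) (Nat.cast_nonneg _)
  · rw [outV_rev]; exact hE

/-! ### Moments of the degree distribution -/

lemma pow_le_pow_mul_three_pow {B p m : ℕ} (hp : p ≤ B) :
    (m : ℝ) ^ p ≤ (B : ℝ) ^ p * 3 ^ (m - B) := by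
  rcases le_total m B with h | h
  · rw [Nat.sub_eq_zero_of_le h, pow_zero, mul_one]
    exact pow_le_pow_left₀ (Nat.cast_nonneg _) (by exact_mod_cast h) _
  · obtain ⟨j, rfl⟩ := Nat.exists_eq_add_of_le h
    rw [Nat.add_sub_cancel_left]
    rcases Nat.eq_zero_or_pos B with rfl | hB
    · have : p = 0 := by omega
      subst this
      simpa using one_le_pow₀ (by norm_num : (1 : ℝ) ≤ 3)
    · have hB' : (0 : ℝ) < B := by exact_mod_cast hB
      have h1 : (1 + (j : ℝ) / B) ^ p ≤ 3 ^ j := by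
        calc (1 + (j : ℝ) / B) ^ p ≤ (1 + (j : ℝ) / B) ^ B :=
              pow_le_pow_right₀ (by linarith [show (0 : ℝ) ≤ (j : ℝ) / B by positivity]) hp
          _ ≤ (Real.exp ((j : ℝ) / B)) ^ B := by
            gcongr
            linarith [Real.add_one_le_exp ((j : ℝ) / B)]
          _ = Real.exp 1 ^ j := by
            rw [← Real.exp_nat_mul, ← Real.exp_nat_mul]
            congr 1
            field_simp
          _ ≤ 3 ^ j := by
            gcongr
            linarith [Real.exp_one_lt_d9]
      calc ((B + j : ℕ) : ℝ) ^ p = (B : ℝ) ^ p * (1 + (j : ℝ) / B) ^ p := by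
            rw [← mul_pow]; congr 1; push_cast; field_simp
        _ ≤ _ := mul_le_mul_of_nonneg_left h1 (by positivity)

lemma sum_half_pow_le (n : ℕ) : ∑ j ∈ range n, (1 / 2 : ℝ) ^ j ≤ 2 := by
  have := sum_geometric_two_le n
  simpa using this

lemma sum_outV_pow_le {k1 k2 M c p : ℕ} (hN : 8 ≤ N) (hM : M ≤ c * N) (A : Finset (Fin N))
    (hA1 : 0 < A.card) (hA : 8 * A.card ≤ N) (hp : p ≤ (k2 + 50 * c) * A.card) :
    ∑ E ∈ dicores k1 k2 N M, (outV E A : ℝ) ^ p ≤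
      2 * (((k2 + 50 * c : ℕ) : ℝ) * A.card) ^ p * (dicores k1 k2 N M).card := by
  set D := dicores k1 k2 N M with hD
  set B := (k2 + 50 * c) * A.card with hB
  have h1 : ∀ j, ((D.filter (fun E => outV E A - B = j)).card : ℝ) * 3 ^ j ≤
      (1 / 2) ^ j * D.card := by
    intro j
    have h2 : ((D.filter (fun E => outV E A - B = j)).card : ℝ) * 6 ^ j ≤ D.card := by
      rcases Nat.eq_zero_or_pos j with rfl | hj
      · rw [pow_zero, mul_one]; exact_mod_cast card_filter_le _ _
      · have h3 := outV_tail (k1 := k1) (k2 := k2) (Q := 6) hN hM A hA1 hA j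
        refine le_trans (mul_le_mul ?_ (by norm_num) (by positivity) (Nat.cast_nonneg _)) h3
        have e : k2 + 2 * c + 8 * c * 6 = k2 + 50 * c := by ring
        rw [e]
        exact_mod_cast card_le_card fun E hE => by
          simp only [mem_filter] at hE ⊢
          exact ⟨hE.1, by omega⟩
    have h4 : (6 : ℝ) ^ j = 3 ^ j * 2 ^ j := by rw [← mul_pow]; norm_num
    rw [one_div, inv_pow, ← div_eq_inv_mul, le_div_iff₀ (by positivity), mul_assoc, ← h4]
    exact h2
  have h2 : ∑ E ∈ D, (3 : ℝ) ^ (outV E A - B) ≤ 2 * D.card := by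
    rw [← sum_fiberwise_of_maps_to (s := D) (t := range (M + 1)) (g := fun E => outV E A - B)]
    · calc _ = ∑ j ∈ range (M + 1),
            ((D.filter (fun E => outV E A - B = j)).card : ℝ) * 3 ^ j := by
            refine sum_congr rfl fun j _ => ?_
            rw [← nsmul_eq_mul, ← sum_const]
            exact sum_congr rfl fun E hE => by rw [(mem_filter.1 hE).2]
        _ ≤ ∑ j ∈ range (M + 1), (1 / 2) ^ j * (D.card : ℝ) := sum_le_sum fun j _ => h1 j
        _ = (∑ j ∈ range (M + 1), (1 / 2) ^ j) * (D.card : ℝ) := by rw [sum_mul]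
        _ ≤ _ := mul_le_mul_of_nonneg_right (sum_half_pow_le _) (Nat.cast_nonneg _)
    · intro E hE
      have : outV E A ≤ M := (mem_dicores.1 hE).1 ▸ card_filter_le _ _
      simp only [mem_range]
      omega
  calc _ ≤ ∑ E ∈ D, (B : ℝ) ^ p * 3 ^ (outV E A - B) :=
        sum_le_sum fun E _ => pow_le_pow_mul_three_pow hp
    _ = (B : ℝ) ^ p * ∑ E ∈ D, (3 : ℝ) ^ (outV E A - B) := by rw [mul_sum]
    _ ≤ (B : ℝ) ^ p * (2 * D.card) := mul_le_mul_of_nonneg_left h2 (by positivity)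
    _ = _ := by rw [hB]; push_cast; ring

/-! ### Few edges entering a small set -/

/-- Number of edges entering `A` from outside of `W`. -/
def ext (E : Finset (Fin N × Fin N)) (A W : Finset (Fin N)) : ℕ :=
  (E.filter (fun e => e.1 ∉ W ∧ e.2 ∈ A)).card

/-- Regularity at two scales. -/
def Good (s s' : ℝ) (E : Finset (Fin N × Fin N)) : Prop := Reg s (1 / 2) E ∧ Reg s' (s / 4) E

lemma card_image_fst_le_inV (E : Finset (Fin N × Fin N)) {A : Finset (Fin N)} {v : Fin N}
    (hv : v ∈ A) : ((univ : Finset (Fin N)).filter (fun x => (x, v) ∈ E)).card ≤ inV E A := by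
  apply card_le_card_of_injOn (fun x => (x, v))
  · intro x hx
    simpa [hv] using hx
  · intro x _ y _ h
    simpa using h

lemma card_image_snd_le_outV (E : Finset (Fin N × Fin N)) {A : Finset (Fin N)} {u : Fin N}
    (hu : u ∈ A) : ((univ : Finset (Fin N)).filter (fun y => (u, y) ∈ E)).card ≤ outV E A := by
  apply card_le_card_of_injOn (fun y => (u, y))
  · intro x hx
    simpa [hu] using hx
  · intro x _ y _ h
    simpa using h

/-- The number of edges whose ends avoid two small sets. -/
lemma Reg.le_card_filter {s t : ℝ} {E : Finset (Fin N × Fin N)} (h : Reg s t E)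
    {X Y : Finset (Fin N)} (hX : (X.card : ℝ) ≤ s * N) (hY : (Y.card : ℝ) ≤ s * N) :
    (E.card : ℝ) - 2 * t * N ≤ ((E.filter (fun e => e.1 ∉ X ∧ e.2 ∉ Y)).card : ℝ) := by
  have h1 : E.card ≤ (E.filter (fun e => e.1 ∉ X ∧ e.2 ∉ Y)).card + (outV E X + inV E Y) := by
    refine le_trans (card_le_card (t := E.filter (fun e => e.1 ∉ X ∧ e.2 ∉ Y) ∪
      (E.filter (fun e => e.1 ∈ X) ∪ E.filter (fun e => e.2 ∈ Y))) ?_) ((card_union_le _ _).trans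
        (Nat.add_le_add_left (card_union_le _ _) _))
    intro e he
    simp only [mem_filter, mem_union]
    tauto
  have h2 : (E.card : ℝ) ≤ (E.filter (fun e => e.1 ∉ X ∧ e.2 ∉ Y)).card +
      (outV E X + inV E Y) := by exact_mod_cast h1
  linarith [(h X hX).1, (h Y hY).2]

section Chain

variable {k1 k2 M : ℕ} {s s' : ℝ} {A W : Finset (Fin N)}

/-- Good dicores with prescribed numbers of edges around `A` and `W`. -/
noncomputable def level (k1 k2 M : ℕ) (s s' : ℝ) (A W : Finset (Fin N)) (f m l : ℕ) :
    Finset (Finset (Fin N × Fin N)) :=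
  (dicores k1 k2 N M).filter
    (fun E => Good s s' E ∧ inV E A = f ∧ outV E W = m ∧ ext E A W = l)

lemma level_step (hM : 2 * N ≤ M) (hAW : A ⊆ W) (hW : (W.card : ℝ) ≤ s' * N)
    (hs : s' ≤ s / 4) (f m l : ℕ) :
    ((level k1 k2 M s s' A W f m l).card : ℝ) * (((f : ℝ) - l) * N) ≤
      ((level k1 k2 M s s' A W f m (l + 1)).card : ℝ) * ((l + 1) * m) := by
  set ins : Finset (Fin N × Fin N) → Finset (Fin N × Fin N) := fun E =>
    E.filter (fun e => e.1 ∈ W ∧ e.2 ∈ A) with hins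
  set tgt : Finset (Fin N × Fin N) → (Fin N × Fin N) → Finset (Fin N × Fin N) := fun E e =>
    E.filter (fun g => g.1 ∉ W ∪ univ.filter (fun x => (x, e.2) ∈ E) ∧
      g.2 ∉ W ∪ univ.filter (fun y => (e.1, y) ∈ E)) with htgt
  have hex : ∀ E u v x y, (u, v) ∈ ins E → (x, y) ∈ tgt E (u, v) →
      u ∈ W ∧ v ∈ A ∧ x ∉ W ∧ y ∉ W ∧ Exchangeable E u v x y := by
    intro E u v x y h1 h2
    simp only [hins, htgt, mem_filter, mem_union, mem_univ, true_and, not_or] at h1 h2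
    exact ⟨h1.2.1, h1.2.2, h2.2.1.1, h2.2.2.1, ⟨h1.1, h2.1, h2.2.1.2, h2.2.2.2⟩⟩
  apply card_mul_le_of_moves (β := Sigma (fun _ : Fin N × Fin N => Fin N × Fin N)) _ _
    (fun E => (ins E).sigma (fun e => tgt E e))
    (fun E => (E.filter (fun e => e.1 ∉ W ∧ e.2 ∈ A)) ×ˢ (E.filter (fun e => e.1 ∈ W)))
    (fun E m => exchange E m.1.1 m.1.2 m.2.1 m.2.2)
    (fun E m => ((m.2.1, m.1.2), (m.1.1, m.2.2)))
  · intro E hE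
    obtain ⟨hE, hG, hf, hm, hl⟩ := mem_filter.1 hE
    have hM' : (2 : ℝ) * N ≤ E.card := by
      rw [(mem_dicores.1 hE).1]; exact_mod_cast hM
    have h1 : (f : ℝ) - l ≤ (ins E).card := by
      have : f ≤ (ins E).card + l := by
        rw [← hf, ← hl]
        refine le_trans (card_le_card ?_) (card_union_le _ _)
        intro e he
        simp only [hins, mem_filter, mem_union] at he ⊢
        tauto
      have : (f : ℝ) ≤ (ins E).card + l := by exact_mod_cast this
      linarith
    have h2 : ∀ e ∈ ins E, (N : ℝ) ≤ (tgt E e).card := by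
      intro e he
      simp only [hins, mem_filter] at he
      have hWs : (W.card : ℝ) ≤ s / 4 * N :=
        hW.trans (mul_le_mul_of_nonneg_right hs (Nat.cast_nonneg _))
      have hsN : 0 ≤ s / 4 * N := (Nat.cast_nonneg _).trans hWs
      have hA : (A.card : ℝ) ≤ s' * N := le_trans (by exact_mod_cast card_le_card hAW) hW
      have b1 : ((W ∪ univ.filter (fun x => (x, e.2) ∈ E)).card : ℝ) ≤ s * N := by
        have e1 := (card_union_le W (univ.filter (fun x => (x, e.2) ∈ E))).trans
          (Nat.add_le_add_left (card_image_fst_le_inV E he.2.2) _)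
        have e2 : ((W ∪ univ.filter (fun x => (x, e.2) ∈ E)).card : ℝ) ≤ W.card + inV E A := by
          exact_mod_cast e1
        linarith [(hG.2 A hA).2]
      have b2 : ((W ∪ univ.filter (fun y => (e.1, y) ∈ E)).card : ℝ) ≤ s * N := by
        have e1 := (card_union_le W (univ.filter (fun y => (e.1, y) ∈ E))).trans
          (Nat.add_le_add_left (card_image_snd_le_outV E he.2.1) _)
        have e2 : ((W ∪ univ.filter (fun y => (e.1, y) ∈ E)).card : ℝ) ≤ W.card + outV E W := by
          exact_mod_cast e1
        linarith [(hG.2 W hW).1]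
      have := hG.1.le_card_filter b1 b2
      simp only [htgt]
      linarith
    rw [card_sigma]; push_cast
    calc _ ≤ ((ins E).card : ℝ) * N := mul_le_mul_of_nonneg_right h1 (Nat.cast_nonneg _)
      _ = ∑ e ∈ ins E, (N : ℝ) := by rw [sum_const, nsmul_eq_mul]
      _ ≤ _ := sum_le_sum h2
  · intro E hE
    obtain ⟨hE, hG, hf, hm, hl⟩ := mem_filter.1 hE
    rw [card_product]
    unfold ext at hl
    unfold outV at hm
    rw [hl, hm]; push_cast; rfl
  · rintro E hE ⟨⟨u, v⟩, ⟨x, y⟩⟩ hmv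
    obtain ⟨h1, h2⟩ := mem_sigma.1 hmv
    obtain ⟨hE, hG, hf, hm, hl⟩ := mem_filter.1 hE
    obtain ⟨hu, hv, hx, hy, h⟩ := hex E u v x y h1 h2
    refine mem_filter.2 ⟨mem_dicores.2 (h.isDicore_exchange ?_ ?_ (mem_dicores.1 hE)),
      ⟨h.reg_exchange hG.1, h.reg_exchange hG.2⟩, ?_, ?_, ?_⟩
    · rintro rfl; exact hx (hAW hv)
    · rintro rfl; exact hy hu
    · rw [← hf]; exact h.inV_exchange A
    · rw [← hm]; exact h.outV_exchange W
    · have := h.card_filter_exchange (fun e => e.1 ∉ W ∧ e.2 ∈ A)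
      have hyA : y ∉ A := fun hh => hy (hAW hh)
      simp only [hu, hv, hx, hyA, not_true, not_false_iff, and_true, and_false, if_true,
        if_false] at this
      unfold ext at hl ⊢
      dsimp only
      omega
  · rintro E hE ⟨⟨u, v⟩, ⟨x, y⟩⟩ hmv
    obtain ⟨h1, h2⟩ := mem_sigma.1 hmv
    obtain ⟨hu, hv, hx, hy, h⟩ := hex E u v x y h1 h2
    simp only [mem_product, mem_filter, Exchangeable.mem_exchange]
    tauto
  · rintro E hE ⟨⟨u, v⟩, ⟨x, y⟩⟩ hmv E' hE' ⟨⟨u', v'⟩, ⟨x', y'⟩⟩ hmv' h3 h4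
    obtain ⟨h1, h2⟩ := mem_sigma.1 hmv
    obtain ⟨h1', h2'⟩ := mem_sigma.1 hmv'
    obtain ⟨-, -, -, -, h⟩ := hex E u v x y h1 h2
    obtain ⟨-, -, -, -, h'⟩ := hex E' u' v' x' y' h1' h2'
    simp only [Prod.mk.injEq] at h4
    obtain ⟨⟨rfl, rfl⟩, rfl, rfl⟩ := h4
    refine ⟨?_, rfl⟩
    have h5 := h.exchange_exchange
    dsimp only at h3
    rw [h3, h'.exchange_exchange] at h5
    exact h5.symm

lemma level_chain (hM : 2 * N ≤ M) (hAW : A ⊆ W) (hW : (W.card : ℝ) ≤ s' * N)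
    (hs : s' ≤ s / 4) (f m n : ℕ) (hn : n ≤ f) :
    ((level k1 k2 M s s' A W f m (f - n)).card : ℝ) * (N : ℝ) ^ n ≤
      (f.choose n : ℝ) * (m : ℝ) ^ n * ((level k1 k2 M s s' A W f m f).card : ℝ) := by
  induction n with
  | zero => simp
  | succ n ih =>
    have h := level_step (k1 := k1) (k2 := k2) hM hAW hW hs f m (f - (n + 1))
    have e1 : f - (n + 1) + 1 = f - n := by omega
    have e2 : (f : ℝ) - ((f - (n + 1) : ℕ) : ℝ) = n + 1 := by
      rw [Nat.cast_sub hn]; push_cast; ring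
    have e3 : ((f - (n + 1) : ℕ) : ℝ) + 1 = ((f - n : ℕ) : ℝ) := by
      rw [← e1]; push_cast; ring
    rw [e1, e2, e3] at h
    have h' := ih (by omega)
    have e4 : (f.choose (n + 1) : ℝ) * (n + 1) = f.choose n * ((f - n : ℕ) : ℝ) := by
      exact_mod_cast Nat.choose_succ_right_eq f n
    refine le_of_mul_le_mul_right ?_ (by positivity : (0 : ℝ) < n + 1)
    calc _ = ((level k1 k2 M s s' A W f m (f - (n + 1))).card : ℝ) * ((n + 1) * N) *
            (N : ℝ) ^ n := by ring
      _ ≤ ((level k1 k2 M s s' A W f m (f - n)).card : ℝ) * (((f - n : ℕ) : ℝ) * m) *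
            (N : ℝ) ^ n := mul_le_mul_of_nonneg_right h (by positivity)
      _ = ((level k1 k2 M s s' A W f m (f - n)).card : ℝ) * (N : ℝ) ^ n *
            (((f - n : ℕ) : ℝ) * m) := by ring
      _ ≤ _ := mul_le_mul_of_nonneg_right h' (by positivity)
      _ = (f.choose n * ((f - n : ℕ) : ℝ)) * (m : ℝ) ^ (n + 1) *
            ((level k1 k2 M s s' A W f m f).card : ℝ) := by ring
      _ = _ := by rw [← e4]; ring

lemma card_level_le {l r p : ℕ} (hN : 0 < N) (hM : 2 * N ≤ M) (hAW : A ⊆ W)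
    (hW : (W.card : ℝ) ≤ s' * N) (hs : s' ≤ s / 4) (hs1 : s ≤ 1) (f m : ℕ) (hl : l ≤ r)
    (hp : p + r ≤ k1 * A.card) :
    ((level k1 k2 M s s' A W f m l).card : ℝ) ≤ 2 ^ r * (2 * (m : ℝ) / N) ^ p *
      (((dicores k1 k2 N M).filter (fun E => inV E A = f ∧ outV E W = m)).card : ℝ) := by
  have hN' : (0 : ℝ) < N := by exact_mod_cast hN
  rcases (level k1 k2 M s s' A W f m l).eq_empty_or_nonempty with h0 | ⟨E, hE⟩
  · rw [h0, card_empty, Nat.cast_zero]; positivity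
  obtain ⟨hE, hG, hf, hm, -⟩ := mem_filter.1 hE
  have h1 : k1 * A.card ≤ f := hf ▸ IsDicore.mul_card_le_inV (mem_dicores.1 hE) A
  have h2 : 2 * (m : ℝ) / N ≤ 1 := by
    rw [div_le_one hN']
    have h3 := (hG.2 W hW).1
    rw [hm] at h3
    nlinarith
  have h3 := level_chain (k1 := k1) (k2 := k2) hM hAW hW hs f m (f - l) (by omega)
  rw [show f - (f - l) = l by omega] at h3
  have h4 : ((level k1 k2 M s s' A W f m f).card : ℝ) ≤
      (((dicores k1 k2 N M).filter (fun E => inV E A = f ∧ outV E W = m)).card : ℝ) := by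
    exact_mod_cast card_le_card fun E hE => by
      simp only [level, mem_filter] at hE ⊢
      tauto
  have h5 : (f.choose (f - l) : ℝ) ≤ 2 ^ r * 2 ^ (f - l) := by
    have : f.choose (f - l) ≤ 2 ^ r * 2 ^ (f - l) := by
      refine (Nat.choose_le_two_pow f (f - l)).trans ?_
      rw [← pow_add]
      exact Nat.pow_le_pow_right (by norm_num) (by omega)
    exact_mod_cast this
  have h6 : ((level k1 k2 M s s' A W f m l).card : ℝ) ≤ 2 ^ r * (2 * (m : ℝ) / N) ^ (f - l) *
      ((level k1 k2 M s s' A W f m f).card : ℝ) := by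
    rw [div_pow, mul_pow, mul_div_assoc', div_mul_eq_mul_div, le_div_iff₀ (by positivity)]
    refine h3.trans (mul_le_mul_of_nonneg_right ?_ (Nat.cast_nonneg _))
    calc _ ≤ (2 ^ r * 2 ^ (f - l)) * (m : ℝ) ^ (f - l) :=
          mul_le_mul_of_nonneg_right h5 (by positivity)
      _ = _ := by ring
  refine h6.trans (mul_le_mul (mul_le_mul_of_nonneg_left ?_ (by positivity)) h4
    (Nat.cast_nonneg _) (by positivity))
  exact pow_le_pow_of_le_one (by positivity) h2 (by omega)

/-- Few dicores have few edges entering a given small set from outside of `W`. -/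
lemma card_ext_le {c r p : ℕ} (hN : 8 ≤ N) (hM : 2 * N ≤ M) (hMc : M ≤ c * N) (hA : 0 < A.card)
    (hAW : A ⊆ W) (hW : (W.card : ℝ) ≤ s' * N) (hs : s' ≤ s / 4) (hs1 : s ≤ 1)
    (hW8 : 8 * W.card ≤ N) (hp : p + r ≤ k1 * A.card) (hp2 : p ≤ k2 * A.card) :
    (((dicores k1 k2 N M).filter (fun E => Good s s' E ∧ ext E A W ≤ r)).card : ℝ) ≤
      (r + 1) * 2 ^ (r + 1) * (2 * ((k2 + 50 * c : ℕ) : ℝ) * W.card / N) ^ p *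
        (dicores k1 k2 N M).card := by
  set D := dicores k1 k2 N M with hD
  have hN' : (0 : ℝ) < N := by exact_mod_cast (by omega : 0 < N)
  have hbd : ∀ E ∈ D, inV E A < M + 1 ∧ outV E W < M + 1 := by
    intro E hE
    have h1 := (mem_dicores.1 hE).1
    have h2 : inV E A ≤ E.card := card_filter_le _ _
    have h3 : outV E W ≤ E.card := card_filter_le _ _
    omega
  set g : ℕ → ℕ → ℝ := fun f m => 2 ^ r * (2 * (m : ℝ) / N) ^ p *
    ((D.filter (fun E => inV E A = f ∧ outV E W = m)).card : ℝ) with hg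
  set I := range (r + 1) ×ˢ (range (M + 1) ×ˢ range (M + 1)) with hI
  have hWpos : A.card ≤ W.card := card_le_card hAW
  refine (card_filter_le_sum D I
    (R := fun i E => Good s s' E ∧ inV E A = i.2.1 ∧ outV E W = i.2.2 ∧ ext E A W = i.1)
    (f := fun i => g i.2.1 i.2.2) (by
      rintro E hE ⟨h1, h2⟩
      refine ⟨⟨ext E A W, inV E A, outV E W⟩, ?_, h1, rfl, rfl, rfl⟩
      have := hbd E hE
      simp only [hI, mem_product, mem_range]
      omega) (by
      rintro ⟨l, f, m⟩ hi
      simp only [hI, mem_product, mem_range] at hi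
      exact card_level_le (by omega) hM hAW hW hs hs1 f m (by omega) hp)).trans ?_
  rw [hI, sum_product]
  dsimp only
  rw [sum_const, card_range, nsmul_eq_mul]
  have h2 : ∑ i ∈ range (M + 1) ×ˢ range (M + 1), g i.1 i.2 =
      2 ^ r * (2 / N) ^ p * ∑ E ∈ D, (outV E W : ℝ) ^ p := by
    rw [mul_sum, ← sum_fiberwise_of_maps_to (s := D) (t := range (M + 1) ×ˢ range (M + 1))
      (g := fun E => (inV E A, outV E W))]
    · refine sum_congr rfl fun i _ => ?_
      rw [hg]
      dsimp only
      rw [← nsmul_eq_mul', ← sum_const]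
      refine sum_congr ?_ fun E hE => ?_
      · ext E; simp only [mem_filter, Prod.ext_iff]
      · rw [← congrArg Prod.snd (mem_filter.1 hE).2, mul_assoc, ← mul_pow]
        congr 2; ring
    · intro E hE
      have := hbd E hE
      simp only [mem_product, mem_range]
      exact this
  have h3 := sum_outV_pow_le (k1 := k1) (k2 := k2) (p := p) hN hMc W (by omega) hW8 (by
    refine hp2.trans (Nat.mul_le_mul (by omega) hWpos))
  rw [h2]
  calc _ ≤ ((r + 1 : ℕ) : ℝ) * (2 ^ r * (2 / N) ^ p *
        (2 * (((k2 + 50 * c : ℕ) : ℝ) * W.card) ^ p * D.card)) := by gcongr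
    _ = ((r + 1 : ℕ) : ℝ) * 2 ^ (r + 1) * ((2 / N) ^ p * (((k2 + 50 * c : ℕ) : ℝ) * W.card) ^ p) *
        D.card := by ring
    _ = _ := by
      rw [← mul_pow]; push_cast
      congr 3; ring

end Chain

/-! ### Union bounds over separators and small sets -/

lemma card_filter_card_lt_le (hN : 0 < N) (k : ℕ) :
    (((univ : Finset (Finset (Fin N))).filter (fun T => T.card < k)).card : ℝ) ≤
      k * (N : ℝ) ^ (k - 1) := by
  have h : ((univ : Finset (Finset (Fin N))).filter (fun T => T.card < k)).card ≤
      k * N ^ (k - 1) := by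
    calc _ ≤ ((range k).biUnion fun i => powersetCard i (univ : Finset (Fin N))).card :=
          card_le_card fun T hT => by simpa [mem_powersetCard] using hT
      _ ≤ ∑ i ∈ range k, (powersetCard i (univ : Finset (Fin N))).card := card_biUnion_le
      _ ≤ ∑ i ∈ range k, N ^ (k - 1) := by
        refine sum_le_sum fun i hi => ?_
        rw [card_powersetCard, card_univ, Fintype.card_fin]
        exact (Nat.choose_le_pow N i).trans
          (Nat.pow_le_pow_right hN (by have := mem_range.1 hi; omega))
      _ = _ := by simp
  exact_mod_cast h

lemma choose_mul_pow_le (N a : ℕ) : (N.choose a : ℝ) * (a : ℝ) ^ a ≤ (3 * N) ^ a := by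
  have h1 : (N.choose a : ℝ) ≤ (N : ℝ) ^ a / a.factorial := Nat.choose_le_pow_div a N
  have h2 : (a : ℝ) ^ a / a.factorial ≤ 3 ^ a := by
    calc (a : ℝ) ^ a / a.factorial ≤ Real.exp a :=
          Real.pow_div_factorial_le_exp a (Nat.cast_nonneg _) a
      _ = Real.exp 1 ^ a := by rw [← Real.exp_nat_mul, mul_one]
      _ ≤ 3 ^ a := by
        gcongr
        linarith [Real.exp_one_lt_d9]
  calc _ ≤ (N : ℝ) ^ a / a.factorial * (a : ℝ) ^ a := by gcongr
    _ = (N : ℝ) ^ a * ((a : ℝ) ^ a / a.factorial) := by ring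
    _ ≤ (N : ℝ) ^ a * 3 ^ a := by gcongr
    _ = _ := by rw [mul_pow]; ring

/-- The union bound over a separator `T` and a vertex set `A`. -/
lemma card_filter_le_of_separators {α : Type*} (D : Finset α) {P : α → Prop}
    {_ : DecidablePred P} {k : ℕ} (hN : 0 < N) {R : Finset (Fin N) → Finset (Fin N) → α → Prop}
    [∀ T A, DecidablePred (R T A)]
    {pa : ℕ → Prop} {w : ℕ → ℝ} {d : ℝ} (hw : ∀ a, 0 ≤ w a) (hd : 0 ≤ d)
    (hcov : ∀ E ∈ D, P E → ∃ T A : Finset (Fin N), T.card < k ∧ pa A.card ∧ R T A E)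
    (hb : ∀ T A : Finset (Fin N), T.card < k → pa A.card →
      (N.choose A.card : ℝ) * (D.filter (R T A)).card ≤ w A.card * d) :
    ((D.filter P).card : ℝ) ≤ k * (N : ℝ) ^ (k - 1) * (∑ a ∈ range (N + 1), w a) * d := by
  have hch : ∀ A : Finset (Fin N), (0 : ℝ) < N.choose A.card := fun A => by
    have := card_le_univ A
    rw [Fintype.card_fin] at this
    exact_mod_cast Nat.choose_pos this
  refine (card_filter_le_sum D ((univ.filter (fun T : Finset (Fin N) => T.card < k)) ×ˢ
    (univ.filter (fun A : Finset (Fin N) => pa A.card))) (R := fun i => R i.1 i.2)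
    (f := fun i => w i.2.card * d / N.choose i.2.card) ?_ ?_).trans ?_
  · intro E hE hP
    obtain ⟨T, A, h1, h2, h3⟩ := hcov E hE hP
    exact ⟨(T, A), by simp [h1, h2], h3⟩
  · rintro ⟨T, A⟩ hi
    simp only [mem_product, mem_filter, mem_univ, true_and] at hi
    rw [le_div_iff₀ (hch A), mul_comm]
    exact hb T A hi.1 hi.2
  · rw [sum_product]
    dsimp only
    rw [sum_const, nsmul_eq_mul, mul_assoc]
    have h1 : ∑ A ∈ univ.filter (fun A : Finset (Fin N) => pa A.card),
        w A.card * d / N.choose A.card ≤ (∑ a ∈ range (N + 1), w a) * d := by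
      calc _ ≤ ∑ A : Finset (Fin N), w A.card * d / N.choose A.card :=
            sum_le_univ_sum_of_nonneg fun A => by have := hw A.card; positivity
        _ = ∑ a ∈ range (N + 1), w a * d := by
          rw [← powerset_univ, sum_powerset_apply_card (fun a => w a * d / N.choose a),
            card_univ, Fintype.card_fin]
          refine sum_congr rfl fun a ha => ?_
          have : (0 : ℝ) < N.choose a := by
            exact_mod_cast Nat.choose_pos (by have := mem_range.1 ha; omega)
          rw [nsmul_eq_mul]; field_simp
        _ = _ := by rw [sum_mul]
    refine mul_le_mul (card_filter_card_lt_le hN k) h1 ?_ (by positivity)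
    exact sum_nonneg fun A _ => by have := hw A.card; positivity

lemma choose_mul_pow_le_of_two_le {k a : ℕ} {K δ : ℝ} (hN : 0 < N) (hk : 2 ≤ k) (hK : 1 ≤ K)
    (ha2 : 2 ≤ a) (haN : (a : ℝ) ≤ δ * N) (hδ : δ ≤ 1) (hL : 3 * (2 * K * k) ^ k * δ ≤ 1 / 2) :
    (N.choose a : ℝ) * (2 * K * (k * a) / N) ^ (k * a) ≤
      4 * (3 * (2 * K * k) ^ k) ^ 2 * ((a : ℝ) / N) ^ (2 * (k - 1)) * (1 / 2) ^ a := by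
  obtain ⟨q, rfl⟩ : ∃ q, k = q + 1 := ⟨k - 1, by omega⟩
  set L : ℝ := 3 * (2 * K * ((q + 1 : ℕ) : ℝ)) ^ (q + 1) with hLdef
  have hN' : (0 : ℝ) < N := by exact_mod_cast hN
  have ha' : (0 : ℝ) < a := by exact_mod_cast (by omega : 0 < a)
  have hL0 : 0 ≤ L := by positivity
  set y : ℝ := (a : ℝ) / N with hy
  have hy0 : 0 < y := by positivity
  have hyδ : y ≤ δ := by rw [hy, div_le_iff₀ hN']; exact haN
  have h1 : (N.choose a : ℝ) ≤ (3 / y) ^ a := by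
    have := choose_mul_pow_le N a
    rw [← le_div_iff₀ (by positivity), ← div_pow] at this
    refine this.trans (le_of_eq ?_)
    congr 1; rw [hy]; field_simp
  have h2 : L * y ^ q ≤ 1 / 2 := by
    refine le_trans (mul_le_mul_of_nonneg_left ?_ hL0) hL
    calc y ^ q ≤ y ^ 1 := pow_le_pow_of_le_one hy0.le (hyδ.trans hδ) (by omega)
      _ = y := pow_one y
      _ ≤ δ := hyδ
  obtain ⟨b, rfl⟩ : ∃ b, a = b + 2 := ⟨a - 2, by omega⟩
  calc _ ≤ (3 / y) ^ (b + 2) * (2 * K * (((q + 1 : ℕ) : ℝ) * ((b + 2 : ℕ) : ℝ)) / N) ^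
          ((q + 1) * (b + 2)) := by gcongr
    _ = (3 / y * (2 * K * ((q + 1 : ℕ) : ℝ) * y) ^ (q + 1)) ^ (b + 2) := by
      rw [pow_mul, ← mul_pow]
      congr 3
      rw [hy]; ring
    _ = (L * y ^ q) ^ (b + 2) := by
      congr 1
      rw [hLdef, mul_pow _ y, pow_succ y]; field_simp
    _ = (L * y ^ q) ^ 2 * (L * y ^ q) ^ b := by rw [pow_add]; ring
    _ ≤ (L * y ^ q) ^ 2 * (1 / 2) ^ b := by gcongr
    _ = _ := by
      rw [Nat.add_sub_cancel, pow_add, mul_pow, ← pow_mul, mul_comm q 2]; ring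

lemma choose_mul_pow_le_of_half {k a r : ℕ} {K δ : ℝ} (hN : 0 < N) (hk : 2 ≤ k) (hK : 1 ≤ K)
    (ha : 0 < a) (haN : (a : ℝ) ≤ δ * N) (hr : 2 * r ≤ a)
    (hL : (12 * K * k) ^ 2 * (2 * K * k * δ) ≤ 1 / 4) :
    (N.choose a : ℝ) * (2 ^ r * (2 * K * (k * a) / N) ^ (k * a - r)) ≤ (1 / 2) ^ a := by
  have hN' : (0 : ℝ) < N := by exact_mod_cast hN
  have ha' : (0 : ℝ) < a := by exact_mod_cast ha
  have hk' : (2 : ℝ) ≤ k := by exact_mod_cast hk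
  have hKk : 1 ≤ K * k := by nlinarith
  set z : ℝ := 2 * K * (k * a) / N with hz
  have hz0 : 0 < z := by positivity
  have hzδ : z ≤ 2 * K * k * δ := by
    rw [hz, div_le_iff₀ hN']
    calc 2 * K * (k * a) = 2 * K * k * a := by ring
      _ ≤ 2 * K * k * (δ * N) := by gcongr
      _ = _ := by ring
  have h12 : 1 ≤ 12 * K * k := by nlinarith
  have hb : (12 * K * k) ^ 2 * z ≤ 1 / 4 :=
    le_trans (mul_le_mul_of_nonneg_left hzδ (by positivity)) hL
  have hz1 : z ≤ 1 := by
    have : 1 * z ≤ (12 * K * k) ^ 2 * z :=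
      mul_le_mul_of_nonneg_right (one_le_pow₀ h12) hz0.le
    linarith
  obtain ⟨h, rfl⟩ : ∃ h, a = r + h := ⟨a - r, by omega⟩
  have e1 : z ^ (k * (r + h) - r) ≤ z ^ (r + h + h) :=
    pow_le_pow_of_le_one hz0.le hz1 (by
      have : 2 * (r + h) ≤ k * (r + h) := Nat.mul_le_mul_right _ hk
      omega)
  have e2 : (N.choose (r + h) : ℝ) * z ^ (r + h) ≤ (6 * K * k) ^ (r + h) := by
    have := choose_mul_pow_le N (r + h)
    rw [← le_div_iff₀ (by positivity), ← div_pow] at this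
    calc _ ≤ (3 * N / ((r + h : ℕ) : ℝ)) ^ (r + h) * z ^ (r + h) := by gcongr
      _ = _ := by
        rw [← mul_pow]; congr 1; rw [hz]; field_simp; ring
  calc _ ≤ (N.choose (r + h) : ℝ) * (2 ^ (r + h) * z ^ (r + h + h)) := by
        gcongr
        · norm_num
        · omega
    _ = ((N.choose (r + h) : ℝ) * z ^ (r + h)) * 2 ^ (r + h) * z ^ h := by
      rw [pow_add z (r + h) h]; ring
    _ ≤ (6 * K * k) ^ (r + h) * 2 ^ (r + h) * z ^ h := by gcongr
    _ = (12 * K * k) ^ (r + h) * z ^ h := by rw [← mul_pow]; congr 2; ring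
    _ ≤ (12 * K * k) ^ (2 * h) * z ^ h := by
      gcongr
      · omega
    _ = ((12 * K * k) ^ 2 * z) ^ h := by rw [pow_mul, ← mul_pow]
    _ ≤ (1 / 4) ^ h := by gcongr
    _ = (1 / 2) ^ (2 * h) := by rw [pow_mul]; norm_num
    _ ≤ _ := pow_le_pow_of_le_one (by norm_num) (by norm_num) (by omega)

lemma exists_rare_not_good (k1 k2 c q : ℕ) : ∃ s s' : ℝ, 0 < s' ∧ s ≤ 1 ∧ s' ≤ s / 4 ∧
    s' ≤ 1 / 8 ∧ Rare k1 k2 c q (fun _ E => ¬ Good s s' E) := by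
  obtain ⟨s, hs, h⟩ := exists_rare_not_reg k1 k2 c q (κ := 1 / 2) (by norm_num)
  have hs1 : 0 < min s 1 := lt_min hs one_pos
  obtain ⟨s', hs', h'⟩ := exists_rare_not_reg k1 k2 c q (κ := min s 1 / 4) (by positivity)
  refine ⟨min s 1, min s' (min (min s 1 / 4) (1 / 8)), by positivity, min_le_right _ _,
    (min_le_right _ _).trans (min_le_left _ _), (min_le_right _ _).trans (min_le_right _ _),
    (h.or h').mono fun N M E _ hE => ?_⟩
  by_contra hc
  rw [not_or, not_not, not_not] at hc
  exact hE ⟨hc.1.mono (min_le_left _ _), hc.2.mono (min_le_left _ _)⟩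

lemma sum_pow_mul_half_pow_le (j : ℕ) : ∃ C : ℝ, 0 < C ∧ ∀ n : ℕ,
    ∑ a ∈ range n, (a : ℝ) ^ j * (1 / 2) ^ a ≤ C := by
  obtain ⟨C, hC, h⟩ := exists_pow_mul_pow_le j (b := 2 / 3) (by norm_num) (by norm_num)
  refine ⟨C * 4, by positivity, fun n => ?_⟩
  calc _ ≤ ∑ a ∈ range n, C * (3 / 4 : ℝ) ^ a := by
        refine sum_le_sum fun a _ => ?_
        calc (a : ℝ) ^ j * (1 / 2) ^ a = ((a : ℝ) ^ j * (2 / 3) ^ a) * (3 / 4) ^ a := by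
              rw [mul_assoc, ← mul_pow]; norm_num
          _ ≤ _ := mul_le_mul_of_nonneg_right (h a) (by positivity)
    _ = C * ∑ a ∈ range n, (3 / 4 : ℝ) ^ a := by rw [mul_sum]
    _ ≤ C * 4 := by
      refine mul_le_mul_of_nonneg_left ?_ hC.le
      have h1 := Summable.sum_le_tsum (range n) (fun a _ => by positivity)
        (summable_geometric_of_lt_one (by norm_num : (0 : ℝ) ≤ 3 / 4) (by norm_num))
      rw [tsum_geometric_of_lt_one (by norm_num) (by norm_num)] at h1
      norm_num at h1 ⊢
      linarith

/-- Small sets have many incoming edges avoiding a given small separator. -/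
lemma exists_rare_small_cut (k1 k2 c k : ℕ) (hk : 2 ≤ k) (hk1 : k ≤ k1) (hk2 : k ≤ k2) :
    ∃ δ : ℝ, 0 < δ ∧
      Rare k1 k2 c (k - 1) (fun N E => ∃ T A : Finset (Fin N), T.card < k ∧ 2 ≤ A.card ∧
        (A.card : ℝ) ≤ δ * N ∧ ext E A (A ∪ T) = 0) ∧
      ∀ η : ℝ, 0 < η → Rare k1 k2 c (k - 1) (fun N E => ∃ T A : Finset (Fin N), T.card < k ∧
        η * N ≤ (A.card : ℝ) ∧ (A.card : ℝ) ≤ δ * N ∧ (ext E A (A ∪ T) : ℝ) ≤ η / 2 * N) := by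
  obtain ⟨s, s', hs'0, hs1, hs', hs8, hG⟩ := exists_rare_not_good k1 k2 c (k - 1)
  set K : ℝ := ((k2 + 50 * c : ℕ) : ℝ) with hKdef
  have hK : 1 ≤ K := by
    rw [hKdef]; exact_mod_cast (by omega : 1 ≤ k2 + 50 * c)
  have hk0 : (0 : ℝ) < k := by exact_mod_cast (by omega : 0 < k)
  set L : ℝ := 3 * (2 * K * k) ^ k with hL
  set L' : ℝ := (12 * K * k) ^ 2 * (2 * K * k) with hL'
  have hL0 : 0 < L := by positivity
  have hL'0 : 0 < L' := by positivity
  obtain ⟨δ, hδ0, hδ1, hδL, hδL', hδs⟩ : ∃ δ : ℝ, 0 < δ ∧ δ ≤ 1 ∧ L * δ ≤ 1 / 2 ∧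
      L' * δ ≤ 1 / 4 ∧ δ ≤ s' / 2 := by
    refine ⟨min (min 1 (s' / 2)) (min (1 / (2 * L)) (1 / (4 * L'))), by positivity,
      (min_le_left _ _).trans (min_le_left _ _), ?_, ?_, (min_le_left _ _).trans (min_le_right _ _)⟩
    · calc _ ≤ L * (1 / (2 * L)) :=
            mul_le_mul_of_nonneg_left ((min_le_right _ _).trans (min_le_left _ _)) hL0.le
        _ = _ := by field_simp
    · calc _ ≤ L' * (1 / (4 * L')) :=
            mul_le_mul_of_nonneg_left ((min_le_right _ _).trans (min_le_right _ _)) hL'0.le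
        _ = _ := by field_simp
  obtain ⟨N1, hN1⟩ := exists_nat_ge (2 * k / s')
  have hWb : ∀ {N : ℕ}, N1 ≤ N → ∀ A T : Finset (Fin N), T.card < k → (A.card : ℝ) ≤ δ * N →
      ((A ∪ T).card : ℝ) ≤ s' * N ∧ 8 * (A ∪ T).card ≤ N := by
    intro N hN A T hT hA
    have h1 : ((A ∪ T).card : ℝ) ≤ A.card + T.card := by exact_mod_cast card_union_le _ _
    have h2 : (T.card : ℝ) ≤ k := by exact_mod_cast hT.le
    have h3 : 2 * k / s' ≤ N := hN1.trans (by exact_mod_cast hN)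
    rw [div_le_iff₀ hs'0] at h3
    have h4 : δ * N ≤ s' / 2 * N := mul_le_mul_of_nonneg_right hδs (Nat.cast_nonneg _)
    have h5 : ((A ∪ T).card : ℝ) ≤ s' * N := by linarith
    refine ⟨h5, ?_⟩
    have h6 : s' * N ≤ 1 / 8 * N := mul_le_mul_of_nonneg_right hs8 (Nat.cast_nonneg _)
    have : (8 : ℝ) * (A ∪ T).card ≤ N := by linarith
    exact_mod_cast this
  have hWk : ∀ {N : ℕ} (A T : Finset (Fin N)), T.card < k → 0 < A.card →
      ((A ∪ T).card : ℝ) ≤ k * A.card := by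
    intro N A T hT hA
    have h1 := card_union_le A T
    have : (A ∪ T).card ≤ k * A.card := by
      have : A.card + k ≤ k * A.card + 1 := by nlinarith
      omega
    exact_mod_cast this
  refine ⟨δ, hδ0, ?_, fun η hη => ?_⟩
  · obtain ⟨C, hC0, hC⟩ := sum_pow_mul_half_pow_le (2 * (k - 1))
    have key : Rare k1 k2 c (k - 1) (fun N E => Good s s' E ∧ ∃ T A : Finset (Fin N),
        T.card < k ∧ 2 ≤ A.card ∧ (A.card : ℝ) ≤ δ * N ∧ ext E A (A ∪ T) = 0) := by
      apply Rare.of_large (max 8 N1) (fun N => k * (8 * L ^ 2 * C) / (N : ℝ) ^ (k - 1))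
        (k * (8 * L ^ 2 * C))
      · intro N hN
        have : (0 : ℝ) < N := by
          exact_mod_cast (by have := (le_max_left 8 N1).trans hN; omega : 0 < N)
        rw [div_mul_cancel₀ _ (by positivity)]
      intro N M hN0 hN hM hMc
      have hN8 : 8 ≤ N := (le_max_left _ _).trans hN0
      have hNN1 : N1 ≤ N := (le_max_right _ _).trans hN0
      have hN' : (0 : ℝ) < N := by exact_mod_cast hN
      refine (card_filter_le_of_separators (dicores k1 k2 N M) (k := k) hN
        (R := fun T A E => Good s s' E ∧ ext E A (A ∪ T) ≤ 0)
        (pa := fun a => 2 ≤ a ∧ (a : ℝ) ≤ δ * N)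
        (w := fun a => 8 * L ^ 2 * ((a : ℝ) / N) ^ (2 * (k - 1)) * (1 / 2) ^ a)
        (d := (dicores k1 k2 N M).card) (fun a => by positivity) (by positivity) ?_ ?_).trans ?_
      · rintro E - ⟨hE, T, A, h1, h2, h3, h4⟩
        exact ⟨T, A, h1, ⟨h2, h3⟩, hE, h4.le⟩
      · rintro T A hT ⟨h2, h3⟩
        obtain ⟨hW, hW8⟩ := hWb hNN1 A T hT h3
        have h := card_ext_le (k1 := k1) (k2 := k2) (r := 0) (p := k * A.card) hN8 hM hMc
          (by omega : 0 < A.card) subset_union_left hW hs' hs1 hW8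
          (by have := Nat.mul_le_mul_right A.card hk1; omega) (Nat.mul_le_mul_right _ hk2)
        have h5 := choose_mul_pow_le_of_two_le hN hk hK h2 h3 hδ1 hδL
        have h6 := hWk A T hT (by omega)
        calc _ ≤ (N.choose A.card : ℝ) * (2 * (2 * K * (k * A.card) / N) ^ (k * A.card) *
              (dicores k1 k2 N M).card) := by
              refine mul_le_mul_of_nonneg_left (h.trans ?_) (Nat.cast_nonneg _)
              rw [Nat.cast_zero, zero_add, zero_add, pow_one, one_mul]
              gcongr
          _ = 2 * ((N.choose A.card : ℝ) * (2 * K * (k * A.card) / N) ^ (k * A.card)) *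
              (dicores k1 k2 N M).card := by ring
          _ ≤ 2 * (4 * L ^ 2 * ((A.card : ℝ) / N) ^ (2 * (k - 1)) * (1 / 2) ^ A.card) *
              (dicores k1 k2 N M).card := by gcongr
          _ = _ := by ring
      · refine mul_le_mul_of_nonneg_right ?_ (Nat.cast_nonneg _)
        have : ∑ a ∈ range (N + 1), 8 * L ^ 2 * ((a : ℝ) / N) ^ (2 * (k - 1)) * (1 / 2) ^ a =
            8 * L ^ 2 / (N : ℝ) ^ (2 * (k - 1)) *
              ∑ a ∈ range (N + 1), (a : ℝ) ^ (2 * (k - 1)) * (1 / 2) ^ a := by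
          rw [mul_sum]
          refine sum_congr rfl fun a _ => ?_
          rw [div_pow]; ring
        rw [this]
        calc _ ≤ k * (N : ℝ) ^ (k - 1) * (8 * L ^ 2 / (N : ℝ) ^ (2 * (k - 1)) * C) := by
              gcongr; exact hC _
          _ = _ := by
            rw [two_mul, pow_add]; field_simp
    refine (key.or hG).mono fun N M E _ hE => ?_
    by_cases h : Good s s' E
    · exact Or.inl ⟨h, hE⟩
    · exact Or.inr h
  · set β : ℝ := (1 / 2 : ℝ) ^ η with hβ
    have hβ0 : 0 ≤ β := by positivity
    have hβ1 : β < 1 := Real.rpow_lt_one (by norm_num) (by norm_num) hη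
    obtain ⟨C, hC0, hC⟩ := exists_pow_mul_pow_le (2 * (k - 1) + 2) hβ0 hβ1
    have key : Rare k1 k2 c (k - 1) (fun N E => Good s s' E ∧ ∃ T A : Finset (Fin N),
        T.card < k ∧ η * N ≤ (A.card : ℝ) ∧ (A.card : ℝ) ≤ δ * N ∧
          (ext E A (A ∪ T) : ℝ) ≤ η / 2 * N) := by
      apply Rare.of_large (max 8 N1)
        (fun N => k * (N : ℝ) ^ (k - 1) * ((N + 1) * (4 * N * β ^ N))) (k * 8 * C)
      · intro N hN
        have hN' : (1 : ℝ) ≤ N := by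
          exact_mod_cast (by have := (le_max_left 8 N1).trans hN; omega : 1 ≤ N)
        calc _ ≤ k * (N : ℝ) ^ (k - 1) * ((N + N) * (4 * N * β ^ N)) * (N : ℝ) ^ (k - 1) := by
              gcongr
          _ = k * 8 * ((N : ℝ) ^ (2 * (k - 1) + 2) * β ^ N) := by
            rw [pow_add, two_mul, pow_add]; ring
          _ ≤ _ := mul_le_mul_of_nonneg_left (hC N) (by positivity)
      intro N M hN0 hN hM hMc
      have hN8 : 8 ≤ N := (le_max_left _ _).trans hN0
      have hNN1 : N1 ≤ N := (le_max_right _ _).trans hN0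
      have hN' : (0 : ℝ) < N := by exact_mod_cast hN
      set r : ℕ := ⌊η / 2 * N⌋₊ with hr
      refine (card_filter_le_of_separators (dicores k1 k2 N M) (k := k) hN
        (R := fun T A E => Good s s' E ∧ ext E A (A ∪ T) ≤ r)
        (pa := fun a => η * N ≤ (a : ℝ) ∧ (a : ℝ) ≤ δ * N)
        (w := fun _ => 4 * N * β ^ N)
        (d := (dicores k1 k2 N M).card) (fun a => by positivity) (by positivity) ?_ ?_).trans ?_
      · rintro E - ⟨hE, T, A, h1, h2, h3, h4⟩
        exact ⟨T, A, h1, ⟨h2, h3⟩, hE, Nat.le_floor h4⟩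
      · rintro T A hT ⟨h2, h3⟩
        have hA0 : 0 < A.card := by
          have : (0 : ℝ) < A.card := lt_of_lt_of_le (by positivity) h2
          exact_mod_cast this
        have hAN : A.card ≤ N := by simpa using card_le_univ A
        have hrA : 2 * r ≤ A.card := by
          have h4 : (r : ℝ) ≤ η / 2 * N := Nat.floor_le (by positivity)
          have : (2 : ℝ) * r ≤ A.card := by linarith
          exact_mod_cast this
        obtain ⟨hW, hW8⟩ := hWb hNN1 A T hT h3
        have hkA : 1 * A.card ≤ k * A.card := Nat.mul_le_mul_right _ (by omega)
        have h := card_ext_le (k1 := k1) (k2 := k2) (r := r) (p := k * A.card - r) hN8 hM hMc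
          hA0 subset_union_left hW hs' hs1 hW8
          (by have := Nat.mul_le_mul_right A.card hk1; omega)
          (by have := Nat.mul_le_mul_right A.card hk2; omega)
        have h5 := choose_mul_pow_le_of_half (K := K) (δ := δ) hN hk hK hA0 h3 hrA
          (by rw [hL'] at hδL'; linarith)
        have h6 := hWk A T hT (by omega)
        have h7 : (1 / 2 : ℝ) ^ A.card ≤ β ^ N := by
          rw [hβ, ← Real.rpow_mul_natCast (by norm_num), ← Real.rpow_natCast]
          exact Real.rpow_le_rpow_of_exponent_ge (by norm_num) (by norm_num) h2
        have h8 : (r : ℝ) + 1 ≤ 2 * N := by exact_mod_cast (by omega : r + 1 ≤ 2 * N)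
        calc _ ≤ (N.choose A.card : ℝ) * (2 * N * 2 ^ (r + 1) *
              (2 * K * (k * A.card) / N) ^ (k * A.card - r) * (dicores k1 k2 N M).card) := by
              refine mul_le_mul_of_nonneg_left (h.trans ?_) (Nat.cast_nonneg _)
              gcongr
          _ = 4 * N * ((N.choose A.card : ℝ) *
              (2 ^ r * (2 * K * (k * A.card) / N) ^ (k * A.card - r))) *
              (dicores k1 k2 N M).card := by rw [pow_succ]; ring
          _ ≤ 4 * N * (1 / 2 : ℝ) ^ A.card * (dicores k1 k2 N M).card := by gcongr
          _ ≤ _ := by gcongr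
      · rw [sum_const, card_range, nsmul_eq_mul]
        push_cast
        exact le_refl _
    refine (key.or hG).mono fun N M E _ hE => ?_
    by_cases h : Good s s' E
    · exact Or.inl ⟨h, hE⟩
    · exact Or.inr h

/-! ### Sets closed under in-neighbours -/

/-- `C` avoids `T` and contains all in-neighbours outside of `T` of its vertices. -/
def Closed (T : Finset (Fin N)) (H : Finset (Fin N × Fin N)) (C : Finset (Fin N)) : Prop :=
  Disjoint C T ∧ ∀ e ∈ H, e.2 ∈ C → e.1 ∉ T → e.1 ∈ C

/-- The vertices from which `y` can be reached while avoiding `T`. -/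
noncomputable def anc (T : Finset (Fin N)) (H : Finset (Fin N × Fin N)) (y : Fin N) :
    Finset (Fin N) :=
  univ.filter (fun w => w ∉ T ∧
    Relation.ReflTransGen (fun a b => a ∉ T ∧ b ∉ T ∧ (a, b) ∈ H) w y)

section Closed

variable {T C C' : Finset (Fin N)} {H H' : Finset (Fin N × Fin N)} {y : Fin N}

lemma Closed.mono (h : Closed T H C) (hH : H' ⊆ H) : Closed T H' C :=
  ⟨h.1, fun e he => h.2 e (hH he)⟩

lemma Closed.union (h : Closed T H C) (h' : Closed T H C') : Closed T H (C ∪ C') := by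
  refine ⟨disjoint_union_left.2 ⟨h.1, h'.1⟩, fun e he h1 h2 => ?_⟩
  rcases mem_union.1 h1 with h1 | h1
  · exact mem_union_left _ (h.2 e he h1 h2)
  · exact mem_union_right _ (h'.2 e he h1 h2)

lemma closed_empty : Closed T H ∅ := ⟨disjoint_empty_left _, fun e _ h => by simp at h⟩

lemma closed_anc : Closed T H (anc T H y) := by
  refine ⟨disjoint_left.2 fun w hw => (mem_filter.1 hw).2.1, fun e he h1 h2 => ?_⟩
  simp only [anc, mem_filter, mem_univ, true_and] at h1 ⊢
  exact ⟨h2, Relation.ReflTransGen.head ⟨h2, h1.1, he⟩ h1.2⟩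

lemma mem_anc_self (hy : y ∉ T) : y ∈ anc T H y := by
  simp [anc, hy, Relation.ReflTransGen.refl]

lemma Closed.anc_subset (h : Closed T H C) (hy : y ∈ C) : anc T H y ⊆ C := by
  intro w hw
  simp only [anc, mem_filter, mem_univ, true_and] at hw
  obtain ⟨-, hw⟩ := hw
  induction hw using Relation.ReflTransGen.head_induction_on with
  | refl => exact hy
  | head h1 _ ih => exact h.2 _ h1.2.2 ih h1.1

lemma Closed.ext_eq_zero (h : Closed T H C) : ext H C (C ∪ T) = 0 := by
  rw [ext, card_eq_zero, filter_eq_empty_iff]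
  rintro e he ⟨h1, h2⟩
  rw [mem_union, not_or] at h1
  exact h1.1 (h.2 e he h2 h1.2)

lemma ext_le_ext_sdiff (E R : Finset (Fin N × Fin N)) (A W : Finset (Fin N)) :
    ext E A W ≤ ext (E \ R) A W + R.card := by
  refine le_trans (card_le_card (t := (E \ R).filter (fun e => e.1 ∉ W ∧ e.2 ∈ A) ∪ R) ?_)
    (card_union_le _ _)
  intro e he
  simp only [mem_filter, mem_union, mem_sdiff] at he ⊢
  tauto

/-- A canonical minimal closed subset of `S` of size at least `b`, for every subgraph. -/
lemma exists_core {S : Finset (Fin N)} {E : Finset (Fin N × Fin N)} {b : ℝ} (hS : Closed T E S)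
    (hb : b ≤ S.card) : ∃ A : Finset (Fin N × Fin N) → Finset (Fin N),
      (∀ H ⊆ E, A H ⊆ S ∧ Closed T H (A H) ∧ b ≤ (A H).card) ∧
      (∀ H ⊆ E, ∀ C ⊆ A H, Closed T H C → b ≤ C.card → C = A H) ∧
      ∀ H ⊆ E, ∀ H' ⊆ H, ∀ v ∈ A H, (∀ e ∈ H \ H', e.2 ∈ S → e.2 = v) → v ∈ A H' := by
  set fam : Finset (Fin N × Fin N) → Finset (Finset (Fin N)) := fun H =>
    univ.filter (fun C => C ⊆ S ∧ Closed T H C ∧ b ≤ C.card) with hfam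
  have hmem : ∀ H C, C ∈ fam H ↔ C ⊆ S ∧ Closed T H C ∧ b ≤ C.card := by
    intro H C; simp [hfam]
  have hex : ∀ H, ∃ C, H ⊆ E → C ∈ fam H ∧ ∀ C' ∈ fam H, toColex C ≤ toColex C' := by
    intro H
    by_cases hH : H ⊆ E
    · obtain ⟨C, h1, h2⟩ := exists_min_image (fam H) toColex
        ⟨S, (hmem H S).2 ⟨Subset.rfl, hS.mono hH, hb⟩⟩
      exact ⟨C, fun _ => ⟨h1, h2⟩⟩
    · exact ⟨∅, fun h => absurd h hH⟩
  choose A hA using hex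
  refine ⟨A, fun H hH => (hmem _ _).1 (hA H hH).1, fun H hH C hC h1 h2 => ?_,
    fun H hH H' hH' v hv he => ?_⟩
  · have h3 := (hA H hH).2 C ((hmem _ _).2 ⟨hC.trans ((hmem _ _).1 (hA H hH).1).1, h1, h2⟩)
    have h4 : toColex C ≤ toColex (A H) := Finset.Colex.toColex_mono hC
    exact toColex_inj.1 (le_antisymm h4 h3)
  · by_contra hv'
    obtain ⟨h1, h2⟩ := hA H hH
    obtain ⟨h1', h2'⟩ := hA H' (hH'.trans hH)
    rw [hmem] at h1 h1'
    have h3 := h2' (A H) ((hmem _ _).2 ⟨h1.1, h1.2.1.mono hH', h1.2.2⟩)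
    have h4 := h2 (A H') ((hmem _ _).2 ⟨h1'.1, ⟨h1'.2.1.1, fun e heH h5 h6 => ?_⟩, h1'.2.2⟩)
    · rw [toColex_inj.1 (le_antisymm h4 h3)] at hv
      exact hv' hv
    · by_cases heH' : e ∈ H'
      · exact h1'.2.1.2 e heH' h5 h6
      · have := he e (mem_sdiff.2 ⟨heH, heH'⟩) (h1'.1 h5)
        exact (hv' (this ▸ h5)).elim

/-- A minimal closed set is the set of ancestors of a vertex, unless there is a closed set of
medium size. -/
lemma exists_eq_anc {A : Finset (Fin N)} {b d : ℝ} (hb : 0 < b) (hbd : 2 * b ≤ d)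
    (hA : Closed T H A) (hbA : b ≤ A.card)
    (hmin : ∀ C ⊆ A, Closed T H C → b ≤ C.card → C = A)
    (hgap : ∀ C, Closed T H C → b ≤ C.card → d < C.card) : ∃ y, A = anc T H y := by
  set fam : Finset (Finset (Fin N)) :=
    univ.filter (fun C => C ⊆ A ∧ Closed T H C ∧ (C.card : ℝ) < b) with hfam
  obtain ⟨U, hU, hUmax⟩ := exists_max_image fam card
    ⟨∅, by simp [hfam, closed_empty, hb]⟩
  simp only [hfam, mem_filter, mem_univ, true_and] at hU hUmax
  obtain ⟨hUA, hUc, hUb⟩ := hU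
  obtain ⟨y, hyA, hyU⟩ : ∃ y ∈ A, y ∉ U := by
    by_contra hc
    push Not at hc
    have : (A.card : ℝ) ≤ U.card := by exact_mod_cast card_le_card hc
    linarith
  refine ⟨y, ?_⟩
  have hsub : anc T H y ⊆ A := hA.anc_subset hyA
  have hyT : y ∉ T := disjoint_left.1 hA.1 hyA
  have hUy : U ∪ anc T H y ⊆ A := union_subset hUA hsub
  have hcl : Closed T H (U ∪ anc T H y) := hUc.union closed_anc
  have hbig : b ≤ (U ∪ anc T H y).card := by
    by_contra hc
    have h1 := hUmax (U ∪ anc T H y) ⟨hUy, hcl, not_le.1 hc⟩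
    have h2 : U.card < (U ∪ anc T H y).card := card_lt_card
      ⟨subset_union_left, fun h => hyU (h (mem_union_right _ (mem_anc_self hyT)))⟩
    omega
  have hanc : b ≤ (anc T H y).card := by
    by_contra hc
    have h1 := hgap _ hcl hbig
    have h2 : ((U ∪ anc T H y).card : ℝ) ≤ U.card + (anc T H y).card := by
      exact_mod_cast card_union_le _ _
    linarith
  exact (hmin _ hsub closed_anc hanc).symm

end Closed

/-! ### Exchanges inside a random set of edges -/

lemma Exchangeable.sdiff_exchange {E R : Finset (Fin N × Fin N)} {u v x w : Fin N}
    (h : Exchangeable E u v x w) (h1 : (u, v) ∈ R) (h2 : (x, w) ∈ R) :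
    exchange E u v x w \ exchange R u v x w = E \ R := by
  ext e
  simp only [mem_sdiff, Exchangeable.mem_exchange]
  have h3 := h.not₁
  have h4 := h.not₂
  constructor
  · rintro ⟨h5, h6⟩
    tauto
  · rintro ⟨h5, h6⟩
    have a1 : e ≠ (u, v) := by rintro rfl; exact h6 h1
    have a2 : e ≠ (x, w) := by rintro rfl; exact h6 h2
    have a3 : e ≠ (x, v) := by rintro rfl; exact h3 h5
    have a4 : e ≠ (u, w) := by rintro rfl; exact h4 h5
    tauto

lemma exchange_subset_exchange {E R : Finset (Fin N × Fin N)} (h : R ⊆ E) (u v x w : Fin N) :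
    exchange R u v x w ⊆ exchange E u v x w := by
  intro e
  simp only [Exchangeable.mem_exchange]
  have := @h e
  tauto

/-- A digraph satisfying `Reg` has few edges whose exchange with a given edge is impossible. -/
lemma Reg.card_filter_blocked_le {E Q : Finset (Fin N × Fin N)} {s s' κ : ℝ} (hQ : Q ⊆ E)
    (h : Reg s κ E) (h' : Reg s' (s / 4) E) (hs' : 1 ≤ s' * N) (hs : s * N / 4 + 1 ≤ s * N)
    (u v : Fin N) :
    ((Q.filter (fun f => ¬ ((f.1, v) ∉ E ∧ (u, f.2) ∉ E ∧ f.1 ≠ v ∧ u ≠ f.2))).card : ℝ) ≤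
      2 * κ * N := by
  set X : Finset (Fin N) := insert v (univ.filter (fun x => (x, v) ∈ E)) with hX
  set Y : Finset (Fin N) := insert u (univ.filter (fun y => (u, y) ∈ E)) with hY
  have hXc : (X.card : ℝ) ≤ s * N := by
    have h1 : (X.card : ℝ) ≤ inV E {v} + 1 := by
      exact_mod_cast (card_insert_le _ _).trans
        (Nat.add_le_add_right (card_image_fst_le_inV E (mem_singleton_self v)) 1)
    have h2 := (h' {v} (by simpa using hs')).2
    linarith
  have hYc : (Y.card : ℝ) ≤ s * N := by
    have h1 : (Y.card : ℝ) ≤ outV E {u} + 1 := by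
      exact_mod_cast (card_insert_le _ _).trans
        (Nat.add_le_add_right (card_image_snd_le_outV E (mem_singleton_self u)) 1)
    have h2 := (h' {u} (by simpa using hs')).1
    linarith
  have h3 : ((Q.filter (fun f => ¬ ((f.1, v) ∉ E ∧ (u, f.2) ∉ E ∧ f.1 ≠ v ∧ u ≠ f.2))).card : ℝ) ≤
      outV E X + inV E Y := by
    have : Q.filter (fun f => ¬ ((f.1, v) ∉ E ∧ (u, f.2) ∉ E ∧ f.1 ≠ v ∧ u ≠ f.2)) ⊆
        E.filter (fun e => e.1 ∈ X) ∪ E.filter (fun e => e.2 ∈ Y) := by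
      intro f hf
      simp only [mem_filter, mem_union, hX, hY, mem_insert, mem_univ, true_and] at hf ⊢
      have h1 := hQ hf.1
      have h2 : (f.2 = u) ↔ (u = f.2) := eq_comm
      tauto
    exact_mod_cast (card_le_card this).trans (card_union_le _ _)
  linarith [(h X hXc).1, (h Y hYc).2]

/-- Dicores with `r` marked edges, `l` of which go from `B` to `A`, where the sets `A` and `B`
depend on the unmarked edges only. -/
noncomputable def marked (D : Finset (Finset (Fin N × Fin N))) (r : ℕ)
    (A B : Finset (Fin N × Fin N) → Finset (Fin N)) (τ : ℝ) (l : ℕ) :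
    Finset (Finset (Fin N × Fin N) × Finset (Fin N × Fin N)) :=
  (D ×ˢ univ).filter (fun p => p.2 ⊆ p.1 ∧ p.2.card = r ∧
    τ * r ^ 2 ≤ inV p.2 (A (p.1 \ p.2)) * outV p.2 (B (p.1 \ p.2)) ∧
    (p.2.filter (fun e => e.1 ∈ B (p.1 \ p.2) ∧ e.2 ∈ A (p.1 \ p.2))).card = l)

lemma card_marked_le {k1 k2 M : ℕ} {D : Finset (Finset (Fin N × Fin N))}
    (hD : D ⊆ dicores k1 k2 N M) (r : ℕ)
    (A B : Finset (Fin N × Fin N) → Finset (Fin N)) (τ : ℝ) (l : ℕ) :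
    (marked D r A B τ l).card ≤ D.card * M.choose r := by
  have h : (marked D r A B τ l).card ≤ (D.sigma fun E => powersetCard r E).card := by
    refine card_le_card_of_injOn (fun p => ⟨p.1, p.2⟩) (fun p hp => ?_) ?_
    · simp only [marked, coe_filter, Set.mem_ofPred_eq, mem_product, mem_univ, and_true] at hp
      simp only [coe_sigma, Set.mem_sigma_iff, mem_coe, mem_powersetCard]
      exact ⟨hp.1, hp.2.1, hp.2.2.1⟩
    · rintro ⟨a, b⟩ _ ⟨a', b'⟩ _ h
      simpa using h
  refine h.trans_eq ?_
  rw [card_sigma, sum_congr rfl fun E hE => ?_, sum_const, smul_eq_mul]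
  rw [card_powersetCard, (mem_dicores.1 (hD hE)).1]

lemma marked_moves_bound {p q r l τ κ : ℝ} (hp : p ≤ r) (hq : q ≤ r) (hp0 : 0 ≤ p)
    (hr : 0 < r) (hτ : 0 < τ) (hpq : τ * r ^ 2 ≤ p * q) (hl : l ≤ τ * r / 4)
    (hκ : κ ≤ τ * r / 4) : τ * r ^ 2 / 4 ≤ (p - l) * (q - l - κ) := by
  have h1 : τ * r ≤ p := by
    by_contra hc
    nlinarith
  have hτr : 0 < τ * r := mul_pos hτ hr
  have h2 : τ * r ≤ q := by
    by_contra hc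
    have := mul_lt_mul_of_pos_left (not_le.1 hc) (hτr.trans_le h1)
    nlinarith
  have h3 : (p - τ * r / 4) * (q - τ * r / 2) ≤ (p - l) * (q - l - κ) :=
    mul_le_mul (by linarith) (by linarith) (by nlinarith) (by nlinarith)
  nlinarith

lemma marked_step {k1 k2 M r l : ℕ} {s s' κ τ : ℝ} {D : Finset (Finset (Fin N × Fin N))}
    (A B : Finset (Fin N × Fin N) → Finset (Fin N))
    (hD : ∀ E, E ∈ D ↔ IsDicore k1 k2 N M E ∧ Reg s κ E ∧ Reg s' (s / 4) E)
    (hs' : 1 ≤ s' * N) (hs : s * N / 4 + 1 ≤ s * N) (hr : 0 < r) (hτ : 0 < τ)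
    (hκ : 2 * κ * N ≤ τ * r / 4) (hl : (l : ℝ) + 1 ≤ τ * r / 8) :
    2 * ((marked D r A B τ l).card : ℝ) ≤ (marked D r A B τ (l + 1)).card := by
  have hr' : (0 : ℝ) < r := by exact_mod_cast hr
  set ok : Finset (Fin N × Fin N) → (Fin N × Fin N) × (Fin N × Fin N) → Prop := fun E m =>
    (m.2.1, m.1.2) ∉ E ∧ (m.1.1, m.2.2) ∉ E ∧ m.2.1 ≠ m.1.2 ∧ m.1.1 ≠ m.2.2 with hok
  set P : Finset (Fin N × Fin N) × Finset (Fin N × Fin N) → Finset (Fin N × Fin N) := fun p =>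
    p.2.filter (fun e => e.2 ∈ A (p.1 \ p.2) ∧ e.1 ∉ B (p.1 \ p.2)) with hP
  set Q : Finset (Fin N × Fin N) × Finset (Fin N × Fin N) → Finset (Fin N × Fin N) := fun p =>
    p.2.filter (fun e => e.1 ∈ B (p.1 \ p.2) ∧ e.2 ∉ A (p.1 \ p.2)) with hQ
  have hmem : ∀ l p, p ∈ marked D r A B τ l ↔ p.1 ∈ D ∧ p.2 ⊆ p.1 ∧ p.2.card = r ∧
      τ * r ^ 2 ≤ inV p.2 (A (p.1 \ p.2)) * outV p.2 (B (p.1 \ p.2)) ∧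
      (p.2.filter (fun e => e.1 ∈ B (p.1 \ p.2) ∧ e.2 ∈ A (p.1 \ p.2))).card = l := by
    intro l p; simp [marked]
  have hex : ∀ p ∈ marked D r A B τ l, ∀ m ∈ ((P p) ×ˢ (Q p)).filter (ok p.1),
      Exchangeable p.1 m.1.1 m.1.2 m.2.1 m.2.2 ∧ Exchangeable p.2 m.1.1 m.1.2 m.2.1 m.2.2 := by
    intro p hp m hm
    simp only [hok, hP, hQ, mem_filter, mem_product] at hm
    obtain ⟨⟨⟨h1, -⟩, h2, -⟩, h3, h4, -⟩ := hm
    have hsub := ((hmem _ _).1 hp).2.1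
    exact ⟨⟨hsub h1, hsub h2, h3, h4⟩, ⟨h1, h2, fun h => h3 (hsub h), fun h => h4 (hsub h)⟩⟩
  have key := card_mul_le_of_moves (marked D r A B τ l) (marked D r A B τ (l + 1))
    (fun p => ((P p) ×ˢ (Q p)).filter (ok p.1))
    (fun p => (p.2.filter (fun e => e.1 ∈ B (p.1 \ p.2) ∧ e.2 ∈ A (p.1 \ p.2))) ×ˢ p.2)
    (fun p m => (exchange p.1 m.1.1 m.1.2 m.2.1 m.2.2, exchange p.2 m.1.1 m.1.2 m.2.1 m.2.2))
    (fun p m => ((m.2.1, m.1.2), (m.1.1, m.2.2))) (τ * r ^ 2 / 4) ((l + 1) * r) ?_ ?_ ?_ ?_ ?_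
  · have h1 : ((l : ℝ) + 1) * r ≤ τ * r ^ 2 / 8 := by nlinarith
    have h2 : (0 : ℝ) ≤ (marked D r A B τ (l + 1)).card := by positivity
    have h3 := mul_le_mul_of_nonneg_left h1 h2
    have h4 : 0 < τ * r ^ 2 / 8 := by positivity
    refine le_of_mul_le_mul_right ?_ h4
    linarith
  · intro p hp
    obtain ⟨hpD, hsub, hcard, hpq, hlp⟩ := (hmem _ _).1 hp
    obtain ⟨-, hreg, hreg'⟩ := (hD _).1 hpD
    have h1 : (((P p) ×ˢ (Q p)).filter (ok p.1)).card =
        ∑ e ∈ P p, ((Q p).filter (fun f => ok p.1 (e, f))).card := by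
      simp only [card_filter, sum_product]
    have h2 : ∀ e ∈ P p, ((Q p).card : ℝ) - 2 * κ * N ≤
        ((Q p).filter (fun f => ok p.1 (e, f))).card := by
      intro e _
      have h3 := hreg.card_filter_blocked_le (Q := Q p) ((filter_subset _ _).trans hsub) hreg'
        hs' hs e.1 e.2
      have h4 := card_filter_add_card_filter_not (s := Q p) (fun f => ok p.1 (e, f))
      have h5 : (((Q p).filter (fun f => ok p.1 (e, f))).card : ℝ) +
        ((Q p).filter (fun f => ¬ ok p.1 (e, f))).card = (Q p).card := by exact_mod_cast h4
      have h6 : (((Q p).filter (fun f => ¬ ok p.1 (e, f))).card : ℝ) ≤ 2 * κ * N := h3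
      linarith
    have h3 : ((P p).card : ℝ) * ((Q p).card - 2 * κ * N) ≤
        (((P p) ×ˢ (Q p)).filter (ok p.1)).card := by
      rw [h1]; push_cast
      refine le_trans (le_of_eq ?_) (sum_le_sum h2)
      rw [sum_const, nsmul_eq_mul]
    refine le_trans ?_ h3
    have h4 : ((P p).card : ℝ) = inV p.2 (A (p.1 \ p.2)) - l := by
      have := card_filter_add_card_filter_not (s := p.2.filter (fun e => e.2 ∈ A (p.1 \ p.2)))
        (fun e => e.1 ∈ B (p.1 \ p.2))
      rw [filter_filter, filter_filter] at this
      simp only [and_comm] at hlp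
      rw [hlp] at this
      rw [eq_sub_iff_add_eq, add_comm]
      exact_mod_cast this
    have h5 : ((Q p).card : ℝ) = outV p.2 (B (p.1 \ p.2)) - l := by
      have := card_filter_add_card_filter_not (s := p.2.filter (fun e => e.1 ∈ B (p.1 \ p.2)))
        (fun e => e.2 ∈ A (p.1 \ p.2))
      rw [filter_filter, filter_filter, hlp] at this
      rw [eq_sub_iff_add_eq, add_comm]
      exact_mod_cast this
    rw [h4, h5]
    refine marked_moves_bound ?_ ?_ (by positivity) hr' hτ hpq ?_ hκ
    · rw [← hcard]; exact_mod_cast card_filter_le _ _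
    · rw [← hcard]; exact_mod_cast card_filter_le _ _
    · have : 0 < τ * r := by positivity
      linarith
  · intro p hp
    obtain ⟨hpD, hsub, hcard, hpq, hlp⟩ := (hmem _ _).1 hp
    rw [card_product, hlp, hcard]
    push_cast
    exact le_rfl
  · intro p hp m hm
    obtain ⟨he1, he2⟩ := hex p hp m hm
    obtain ⟨hpD, hsub, hcard, hpq, hlp⟩ := (hmem _ _).1 hp
    obtain ⟨hdi, hreg, hreg'⟩ := (hD _).1 hpD
    simp only [hok, hP, hQ, mem_filter, mem_product] at hm
    obtain ⟨⟨⟨h1, a1, b1⟩, h2, a2, b2⟩, -, -, h5, h6⟩ := hm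
    rw [hmem]
    simp only [he1.sdiff_exchange h1 h2]
    refine ⟨(hD _).2 ⟨he1.isDicore_exchange h5 h6 hdi, he1.reg_exchange hreg,
      he1.reg_exchange hreg'⟩, exchange_subset_exchange hsub _ _ _ _, ?_, ?_, ?_⟩
    · rw [he2.card_exchange, hcard]
    · rw [he2.inV_exchange, he2.outV_exchange]; exact hpq
    · have := he2.card_filter_exchange
        (fun e => e.1 ∈ B (p.1 \ p.2) ∧ e.2 ∈ A (p.1 \ p.2))
      rw [hlp] at this
      simpa [a1, a2, b1, b2] using this
  · intro p hp m hm
    obtain ⟨he1, he2⟩ := hex p hp m hm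
    obtain ⟨hpD, hsub, hcard, hpq, hlp⟩ := (hmem _ _).1 hp
    simp only [hok, hP, hQ, mem_filter, mem_product] at hm
    obtain ⟨⟨⟨h1, a1, b1⟩, h2, a2, b2⟩, -, -, h5, h6⟩ := hm
    simp only [mem_product, mem_filter, he1.sdiff_exchange h1 h2]
    refine ⟨⟨he2.symm.mem₁, a2, a1⟩, he2.symm.mem₂⟩
  · intro p hp m hm p' hp' m' hm' h h'
    obtain ⟨he1, he2⟩ := hex p hp m hm
    obtain ⟨he1', he2'⟩ := hex p' hp' m' hm'
    obtain ⟨⟨u, v⟩, x, w⟩ := m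
    obtain ⟨⟨u', v'⟩, x', w'⟩ := m'
    simp only [Prod.mk.injEq] at h h'
    obtain ⟨⟨rfl, rfl⟩, rfl, rfl⟩ := h'
    refine ⟨Prod.ext ?_ ?_, rfl⟩
    · rw [← he1.exchange_exchange, ← he1'.exchange_exchange]
      simp only [h.1]
    · rw [← he2.exchange_exchange, ← he2'.exchange_exchange]
      simp only [h.2]

lemma marked_zero_le {k1 k2 M r : ℕ} {s s' κ τ : ℝ} {D : Finset (Finset (Fin N × Fin N))}
    (A B : Finset (Fin N × Fin N) → Finset (Fin N))
    (hD : ∀ E, E ∈ D ↔ IsDicore k1 k2 N M E ∧ Reg s κ E ∧ Reg s' (s / 4) E)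
    (hs' : 1 ≤ s' * N) (hs : s * N / 4 + 1 ≤ s * N) (hr : 0 < r) (hτ : 0 < τ)
    (hκ : 2 * κ * N ≤ τ * r / 4) {t : ℕ} (ht : (t : ℝ) ≤ τ * r / 8) :
    2 ^ t * ((marked D r A B τ 0).card : ℝ) ≤ (dicores k1 k2 N M).card * M.choose r := by
  have h : 2 ^ t * ((marked D r A B τ 0).card : ℝ) ≤ (marked D r A B τ t).card := by
    induction t with
    | zero => simp
    | succ t ih =>
      push_cast at ht
      have h1 := ih (by linarith)
      have h2 := marked_step (l := t) A B hD hs' hs hr hτ hκ ht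
      rw [pow_succ]
      linarith
  have hsub : D ⊆ dicores k1 k2 N M := fun E hE => mem_dicores.2 ((hD E).1 hE).1
  refine h.trans ?_
  exact_mod_cast (card_marked_le hsub r A B τ t).trans
    (Nat.mul_le_mul_right _ (card_le_card hsub))

/-! ### Marking edges at the boundary of closed sets -/

lemma rev_sdiff (E R : Finset (Fin N × Fin N)) : rev (E \ R) = rev E \ rev R := by
  ext e; simp [mem_rev]

lemma rev_mono {E R : Finset (Fin N × Fin N)} (h : R ⊆ E) : rev R ⊆ rev E := fun _ he =>
  mem_rev.2 (h (mem_rev.1 he))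

lemma choose_mul_le (M r : ℕ) :
    M.choose (r + 2) * ((r + 2) * (r + 1)) ≤ M.choose r * M ^ 2 := by
  have h1 := Nat.choose_succ_right_eq M (r + 1)
  have h2 := Nat.choose_succ_right_eq M r
  calc M.choose (r + 2) * ((r + 2) * (r + 1)) = M.choose (r + 1) * (M - (r + 1)) * (r + 1) := by
        rw [← h1]; ring
    _ = M.choose r * ((M - r) * (M - (r + 1))) := by
        rw [mul_right_comm, h2]; ring
    _ ≤ M.choose r * (M * M) := by gcongr <;> omega
    _ = _ := by ring

/-- A lower bound for the number of elements of a finset at which a bounded function is large. -/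
lemma le_card_filter_of_le_sum {α : Type*} (X : Finset α) (g : α → ℝ) {a K : ℝ} (hK : 0 < K)
    (ha : 0 ≤ a) (hg : ∀ x ∈ X, g x ≤ K) (hsum : 2 * a * K * X.card ≤ ∑ x ∈ X, g x) :
    a * X.card ≤ (X.filter (fun x => a * K ≤ g x)).card := by
  have h : ∑ x ∈ X, g x ≤ ∑ x ∈ X, (a * K + if a * K ≤ g x then K else 0) := by
    refine sum_le_sum fun x hx => ?_
    split_ifs with hx'
    · have := hg x hx
      have : 0 ≤ a * K := by positivity
      linarith
    · linarith [not_le.1 hx']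
  rw [sum_add_distrib, ← sum_filter, sum_const, sum_const, nsmul_eq_mul, nsmul_eq_mul] at h
  refine le_of_mul_le_mul_right ?_ hK
  linarith

section Cut

variable {T S S' : Finset (Fin N)} {E : Finset (Fin N × Fin N)}

/-- No edge goes from one side of a cut to the other. -/
lemma Closed.not_mem_of_mem (hS : Closed T E S) (hS' : Closed T (rev E) S') (hd : Disjoint S S')
    {e : Fin N × Fin N} (he : e ∈ E) (h1 : e.1 ∈ S') : e.2 ∉ S := fun h2 =>
  disjoint_left.1 hd (hS.2 e he h2 (disjoint_left.1 hS'.1 h1)) h1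

lemma choose_mul_sq_le_sum {b : ℝ} {r : ℕ} (hin : ∀ Z, 2 * Z.card ≤ inV E Z)
    (hout : ∀ Z, 2 * Z.card ≤ outV E Z) (hS : Closed T E S) (hS' : Closed T (rev E) S')
    (hd : Disjoint S S') (hb : 0 ≤ b) (hr : (r : ℝ) ≤ b)
    {A B : Finset (Fin N × Fin N) → Finset (Fin N)}
    (hA : ∀ H ⊆ E, A H ⊆ S ∧ Closed T H (A H) ∧ b ≤ (A H).card)
    (hA' : ∀ H ⊆ E, ∀ H' ⊆ H, ∀ v ∈ A H, (∀ e ∈ H \ H', e.2 ∈ S → e.2 = v) → v ∈ A H')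
    (hB : ∀ H ⊆ rev E, B H ⊆ S' ∧ Closed T H (B H) ∧ b ≤ (B H).card)
    (hB' : ∀ H ⊆ rev E, ∀ H' ⊆ H, ∀ v ∈ B H, (∀ e ∈ H \ H', e.2 ∈ S' → e.2 = v) → v ∈ B H') :
    E.card.choose r * b ^ 2 ≤ ∑ R ∈ powersetCard (r + 2) E,
      (inV R (A (E \ R)) * outV R (B (rev (E \ R))) : ℝ) := by
  have hcount : ∀ (P : Fin N × Fin N → Prop) [DecidablePred P], ∀ R ∈ powersetCard r E,
      2 * b ≤ (E.filter P).card → b ≤ ((E \ R).filter P).card := by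
    intro P _ R hR h
    rw [mem_powersetCard] at hR
    have h1 : (E.filter P).card ≤ ((E \ R).filter P).card + R.card := by
      refine le_trans (card_le_card (t := (E \ R).filter P ∪ R) ?_) (card_union_le _ _)
      intro e he
      simp only [mem_filter, mem_union, mem_sdiff] at he ⊢
      tauto
    rw [hR.2] at h1
    have h2 : ((E.filter P).card : ℝ) ≤ ((E \ R).filter P).card + r := by exact_mod_cast h1
    linarith
  set Y := (powersetCard (r + 2) E).sigma (fun R => (R.filter (fun e => e.2 ∈ A (E \ R))) ×ˢ
    (R.filter (fun e => e.1 ∈ B (rev (E \ R))))) with hY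
  set mv : Finset (Fin N × Fin N) → Finset ((Fin N × Fin N) × (Fin N × Fin N)) := fun R =>
    ((E \ R).filter (fun e => e.2 ∈ A (E \ R))) ×ˢ
      ((E \ R).filter (fun e => e.1 ∈ B (rev (E \ R)))) with hmv
  have key := card_mul_le_of_moves (powersetCard r E) Y mv (fun _ => {()})
    (fun R m => ⟨insert m.1 (insert m.2 R), m⟩) (fun _ _ => ()) (b ^ 2) 1 ?_ (by simp) ?_
    (by simp) ?_
  · rw [card_powersetCard, mul_one] at key
    refine key.trans (le_of_eq ?_)
    rw [hY, card_sigma]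
    push_cast
    refine sum_congr rfl fun R _ => ?_
    rw [card_product]
    push_cast
    rfl
  · intro R hR
    rw [hmv, card_product]
    push_cast
    have h1 : b ≤ ((E \ R).filter (fun e => e.2 ∈ A (E \ R))).card := by
      refine hcount _ R hR ?_
      have h2 : (2 * (A (E \ R)).card : ℝ) ≤ (E.filter (fun e => e.2 ∈ A (E \ R))).card := by
        exact_mod_cast hin (A (E \ R))
      linarith [(hA (E \ R) sdiff_subset).2.2]
    have h1' : b ≤ ((E \ R).filter (fun e => e.1 ∈ B (rev (E \ R)))).card := by
      refine hcount _ R hR ?_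
      have h2 : (2 * (B (rev (E \ R))).card : ℝ) ≤
          (E.filter (fun e => e.1 ∈ B (rev (E \ R)))).card := by
        exact_mod_cast hout (B (rev (E \ R)))
      linarith [(hB (rev (E \ R)) (rev_mono sdiff_subset)).2.2]
    nlinarith
  · intro R hR m hm
    rw [mem_powersetCard] at hR
    obtain ⟨e, f⟩ := m
    simp only [hmv, mem_product, mem_filter, mem_sdiff] at hm
    obtain ⟨⟨⟨heE, heR⟩, heA⟩, ⟨hfE, hfR⟩, hfB⟩ := hm
    have heS := (hA (E \ R) sdiff_subset).1 heA
    have hfS := (hB (rev (E \ R)) (rev_mono sdiff_subset)).1 hfB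
    have hfS' : f.2 ∉ S := hS.not_mem_of_mem hS' hd hfE hfS
    have heS' : e.1 ∉ S' := fun h => hS.not_mem_of_mem hS' hd heE h heS
    have hef : e ≠ f := by rintro rfl; exact hfS' heS
    have hsub : E \ insert e (insert f R) ⊆ E \ R :=
      sdiff_subset_sdiff Subset.rfl ((subset_insert _ _).trans (subset_insert _ _))
    simp only [hY, mem_sigma, mem_powersetCard, mem_product, mem_filter]
    refine ⟨⟨?_, ?_⟩, ⟨mem_insert_self _ _, ?_⟩, by simp, ?_⟩
    · simp [insert_subset_iff, heE, hfE, hR.1]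
    · rw [card_insert_of_notMem (by simp [hef, heR]), card_insert_of_notMem hfR, hR.2]
    · refine hA' (E \ R) sdiff_subset _ hsub _ heA fun g hg hgS => ?_
      simp only [mem_sdiff, mem_insert, not_and, not_not] at hg
      rcases hg.2 hg.1.1 with rfl | rfl | h
      · rfl
      · exact absurd hgS hfS'
      · exact absurd h hg.1.2
    · refine hB' (rev (E \ R)) (rev_mono sdiff_subset) _ (rev_mono hsub) _ hfB fun g hg hgS => ?_
      simp only [mem_sdiff, mem_rev, mem_insert, not_and, not_not] at hg
      rcases hg.2 hg.1.1 with h | h | h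
      · refine absurd ?_ heS'
        rw [← h]; exact hgS
      · rw [← h]; rfl
      · exact absurd h hg.1.2
  · intro R hR m hm R' hR' m' hm' h _
    simp only [Sigma.mk.injEq, heq_eq_eq] at h
    obtain ⟨h, rfl⟩ := h
    refine ⟨?_, rfl⟩
    simp only [hmv, mem_product, mem_filter, mem_sdiff] at hm hm'
    ext g
    have h1 := Finset.ext_iff.1 h g
    simp only [mem_insert] at h1
    by_cases g1 : g = m.1
    · rw [g1]; exact iff_of_false hm.1.1.2 hm'.1.1.2
    by_cases g2 : g = m.2
    · rw [g2]; exact iff_of_false hm.2.1.2 hm'.2.1.2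
    simpa [g1, g2] using h1

lemma le_card_marks {b d τ : ℝ} {M r : ℕ} (hM : E.card = M)
    (hin : ∀ Z, 2 * Z.card ≤ inV E Z) (hout : ∀ Z, 2 * Z.card ≤ outV E Z)
    (hS : Closed T E S) (hS' : Closed T (rev E) S') (hd : Disjoint S S')
    (hSb : b ≤ S.card) (hSb' : b ≤ S'.card) (hb : 0 < b) (hbd : 2 * b ≤ d)
    (hr : (r : ℝ) ≤ b) (hr2 : 2 ≤ r) (hτ : 0 ≤ τ) (hτM : 4 * τ * M ^ 2 ≤ b ^ 2)
    (hexp : ∀ C : Finset (Fin N), b ≤ C.card → (C.card : ℝ) ≤ d → r < ext E C (C ∪ T))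
    (hexp' : ∀ C : Finset (Fin N), b ≤ C.card → (C.card : ℝ) ≤ d → r < ext (rev E) C (C ∪ T)) :
    τ * M.choose r ≤ ((powersetCard r E).filter (fun R => ∃ y z : Fin N,
      τ * r ^ 2 ≤ inV R (anc T (E \ R) y) * outV R (anc T (rev (E \ R)) z) ∧
      (R.filter (fun e => e.1 ∈ anc T (rev (E \ R)) z ∧ e.2 ∈ anc T (E \ R) y)).card =
        0)).card := by
  obtain ⟨A, hA, hAmin, hA'⟩ := exists_core hS hSb
  obtain ⟨B, hB, hBmin, hB'⟩ := exists_core hS' hSb'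
  obtain ⟨r', rfl⟩ := Nat.exists_eq_add_of_le' hr2
  have hsum := choose_mul_sq_le_sum (r := r') hin hout hS hS' hd hb.le
    (by push_cast at hr; linarith) hA hA' hB hB'
  have havg := le_card_filter_of_le_sum (powersetCard (r' + 2) E)
    (fun R => (inV R (A (E \ R)) * outV R (B (rev (E \ R))) : ℝ)) (a := τ)
    (K := ((r' + 2 : ℕ) : ℝ) ^ 2) (by positivity) hτ ?_ ?_
  · rw [card_powersetCard, hM] at havg
    refine havg.trans ?_
    refine Nat.cast_le.2 (card_le_card fun R hR => ?_)
    rw [mem_filter] at hR ⊢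
    obtain ⟨hR, hpq⟩ := hR
    refine ⟨hR, ?_⟩
    rw [mem_powersetCard] at hR
    have hsub : E \ R ⊆ E := sdiff_subset
    have hsub' : rev (E \ R) ⊆ rev E := rev_mono hsub
    obtain ⟨y, hy⟩ := exists_eq_anc hb hbd (hA _ hsub).2.1 (hA _ hsub).2.2
      (hAmin _ hsub) fun C hC hbC => by
        by_contra hc
        have h1 := hexp C hbC (not_lt.1 hc)
        have h2 := ext_le_ext_sdiff E R C (C ∪ T)
        rw [hC.ext_eq_zero, hR.2] at h2
        omega
    obtain ⟨z, hz⟩ := exists_eq_anc hb hbd (hB _ hsub').2.1 (hB _ hsub').2.2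
      (hBmin _ hsub') fun C hC hbC => by
        by_contra hc
        have h1 := hexp' C hbC (not_lt.1 hc)
        have h2 := ext_le_ext_sdiff (rev E) (rev R) C (C ∪ T)
        rw [← rev_sdiff, hC.ext_eq_zero, card_rev, hR.2] at h2
        omega
    refine ⟨y, z, ?_, ?_⟩
    · rw [← hy, ← hz]; exact hpq
    · rw [← hy, ← hz, card_eq_zero, filter_eq_empty_iff]
      rintro e he ⟨h1, h2⟩
      exact hS.not_mem_of_mem hS' hd (hR.1 he) ((hB _ hsub').1 h1) ((hA _ hsub).1 h2)
  · intro R hR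
    rw [mem_powersetCard] at hR
    have h1 : (inV R (A (E \ R)) : ℝ) ≤ (r' + 2 : ℕ) := by
      rw [← hR.2]; exact_mod_cast card_filter_le _ _
    have h2 : (outV R (B (rev (E \ R))) : ℝ) ≤ (r' + 2 : ℕ) := by
      rw [← hR.2]; exact_mod_cast card_filter_le _ _
    rw [pow_two]
    exact mul_le_mul h1 h2 (by positivity) (by positivity)
  · rw [card_powersetCard, hM]
    rw [hM] at hsum
    refine le_trans ?_ hsum
    have h1 : (M.choose (r' + 2) * ((r' + 2) * (r' + 1)) : ℝ) ≤ M.choose r' * M ^ 2 := by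
      exact_mod_cast choose_mul_le M r'
    have h2 : (M.choose r' : ℝ) * (4 * τ * M ^ 2) ≤ M.choose r' * b ^ 2 :=
      mul_le_mul_of_nonneg_left hτM (by positivity)
    have h3 := mul_le_mul_of_nonneg_left h1 (by positivity : 0 ≤ 4 * τ)
    refine le_trans ?_ (h3.trans ((le_of_eq (by ring)).trans h2))
    push_cast
    have h4 : 0 ≤ τ * M.choose (r' + 2) * ((r' + 2) * r') := by positivity
    nlinarith

end Cut

/-- The dicores which, after removal of the vertices in `T`, have a cut that separates two large
sets, although all sets of medium size expand. -/
def LargeCut (b d : ℝ) (r : ℕ) (T : Finset (Fin N)) (E : Finset (Fin N × Fin N)) : Prop :=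
  (∃ S S', Closed T E S ∧ Closed T (rev E) S' ∧ Disjoint S S' ∧ b ≤ S.card ∧ b ≤ S'.card) ∧
  (∀ C : Finset (Fin N), b ≤ C.card → (C.card : ℝ) ≤ d → r < ext E C (C ∪ T)) ∧
  ∀ C : Finset (Fin N), b ≤ C.card → (C.card : ℝ) ≤ d → r < ext (rev E) C (C ∪ T)

lemma card_largeCut_le {k1 k2 M r t : ℕ} {s s' κ τ b d : ℝ} (hk1 : 2 ≤ k1) (hk2 : 2 ≤ k2)
    (hs' : 1 ≤ s' * N) (hs : s * N / 4 + 1 ≤ s * N) (hτ : 0 < τ)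
    (hκ : 2 * κ * N ≤ τ * r / 4) (ht : (t : ℝ) ≤ τ * r / 8)
    (hb : 0 < b) (hbd : 2 * b ≤ d) (hr : (r : ℝ) ≤ b) (hr2 : 2 ≤ r) (hrM : r ≤ M)
    (hτM : 4 * τ * M ^ 2 ≤ b ^ 2) (T : Finset (Fin N)) :
    (((dicores k1 k2 N M).filter (fun E => Reg s κ E ∧ Reg s' (s / 4) E ∧
      LargeCut b d r T E)).card : ℝ) * (τ * 2 ^ t) ≤ N ^ 2 * (dicores k1 k2 N M).card := by
  set D := (dicores k1 k2 N M).filter (fun E => Reg s κ E ∧ Reg s' (s / 4) E) with hD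
  set X := (dicores k1 k2 N M).filter (fun E => Reg s κ E ∧ Reg s' (s / 4) E ∧
      LargeCut b d r T E) with hX
  set A : Fin N → Finset (Fin N × Fin N) → Finset (Fin N) := fun y H => anc T H y with hA
  set B : Fin N → Finset (Fin N × Fin N) → Finset (Fin N) := fun z H => anc T (rev H) z with hB
  have hmD : ∀ E, E ∈ D ↔ IsDicore k1 k2 N M E ∧ Reg s κ E ∧ Reg s' (s / 4) E := by
    intro E; simp [hD, mem_dicores]
  have hY : (((univ : Finset (Fin N × Fin N)).biUnion
      fun p => marked D r (A p.1) (B p.2) τ 0).card : ℝ) * 2 ^ t ≤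
        N ^ 2 * ((dicores k1 k2 N M).card * M.choose r) := by
    have h2 : (((univ : Finset (Fin N × Fin N)).biUnion
        fun p => marked D r (A p.1) (B p.2) τ 0).card : ℝ) ≤
        ∑ p : Fin N × Fin N, ((marked D r (A p.1) (B p.2) τ 0).card : ℝ) := by
      exact_mod_cast card_biUnion_le
    refine (mul_le_mul_of_nonneg_right h2 (by positivity)).trans ?_
    rw [sum_mul]
    refine (sum_le_sum (g := fun _ => ((dicores k1 k2 N M).card * M.choose r : ℝ))
      fun p _ => ?_).trans (le_of_eq ?_)
    · rw [mul_comm]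
      exact marked_zero_le (A p.1) (B p.2) hmD hs' hs (by omega) hτ hκ ht
    · rw [sum_const, card_univ, Fintype.card_prod, Fintype.card_fin, nsmul_eq_mul]
      push_cast
      ring
  have hXY := card_mul_le_of_moves X
    ((univ : Finset (Fin N × Fin N)).biUnion fun p => marked D r (A p.1) (B p.2) τ 0)
    (fun E => (powersetCard r E).filter (fun R => ∃ y z : Fin N,
      τ * r ^ 2 ≤ inV R (anc T (E \ R) y) * outV R (anc T (rev (E \ R)) z) ∧
      (R.filter (fun e => e.1 ∈ anc T (rev (E \ R)) z ∧ e.2 ∈ anc T (E \ R) y)).card = 0))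
    (fun _ => {()}) (fun E R => (E, R)) (fun _ _ => ()) (τ * M.choose r) 1 ?_ (by simp) ?_
    (by simp) ?_
  · have h3 : (0 : ℝ) < M.choose r := by exact_mod_cast Nat.choose_pos hrM
    refine le_of_mul_le_mul_right ?_ h3
    have h4 := mul_le_mul_of_nonneg_right hXY (by positivity : (0 : ℝ) ≤ 2 ^ t)
    linarith
  · intro E hE
    simp only [hX, mem_filter, mem_dicores] at hE
    obtain ⟨hdi, -, -, ⟨S, S', hS, hS', hd, hSb, hSb'⟩, hexp, hexp'⟩ := hE
    refine le_card_marks hdi.1 (fun Z => ?_) (fun Z => ?_) hS hS' hd hSb hSb' hb hbd hr hr2 hτ.le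
      hτM hexp hexp'
    · exact (Nat.mul_le_mul_right _ hk1).trans (IsDicore.mul_card_le_inV hdi Z)
    · rw [← inV_rev]
      exact (Nat.mul_le_mul_right _ hk2).trans (IsDicore.mul_card_le_inV (isDicore_rev hdi) Z)
  · intro E hE R hR
    simp only [hX, mem_filter, mem_dicores] at hE
    simp only [mem_filter, mem_powersetCard] at hR
    obtain ⟨⟨hRE, hRr⟩, y, z, hyz⟩ := hR
    rw [mem_biUnion]
    refine ⟨(y, z), mem_univ _, ?_⟩
    simp only [marked, mem_filter, mem_product, mem_univ, and_true]
    exact ⟨(hmD E).2 ⟨hE.1, hE.2.1, hE.2.2.1⟩, hRE, hRr, hyz⟩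
  · intro E _ R _ E' _ R' _ h _
    exact Prod.mk.injEq .. ▸ h

/-! ### Large cuts are rare -/

lemma exists_rare_largeCut (k1 k2 c k q : ℕ) (hk1 : 2 ≤ k1) (hk2 : 2 ≤ k2) {δ : ℝ} (hδ : 0 < δ) :
    ∃ η : ℝ, 0 < η ∧ 2 * η ≤ δ ∧ Rare k1 k2 c q (fun N E => ∃ T : Finset (Fin N), T.card < k ∧
      LargeCut (η * N) (δ * N) ⌊η / 2 * N⌋₊ T E) := by
  set η : ℝ := min (δ / 2) 1 with hη
  have hη0 : 0 < η := lt_min (by positivity) one_pos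
  have hη1 : η ≤ 1 := min_le_right _ _
  have hηδ : 2 * η ≤ δ := by linarith [min_le_left (δ / 2) 1]
  set τ : ℝ := η ^ 2 / (4 * (c + 1) ^ 2) with hτ
  have hτ0 : 0 < τ := by positivity
  set κ : ℝ := τ * η / 64 with hκ
  have hκ0 : 0 < κ := by positivity
  obtain ⟨s, hs, hR⟩ := exists_rare_not_reg k1 k2 c q hκ0
  obtain ⟨s', hs', hR'⟩ := exists_rare_not_reg k1 k2 c q (κ := s / 4) (by positivity)
  refine ⟨η, hη0, hηδ, ?_⟩
  set a : ℝ := τ * η / 32 with ha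
  have ha0 : 0 < a := by positivity
  obtain ⟨C, hC, hpow⟩ := exists_pow_mul_pow_le (k - 1 + 2 + q) (b := (2 : ℝ) ^ (-a))
    (by positivity) (Real.rpow_lt_one_of_one_lt_of_neg (by norm_num) (by linarith))
  obtain ⟨N0, hN0⟩ := exists_nat_ge (max (8 / η) (max (1 / s') (2 / s)))
  have hL : Rare k1 k2 c q (fun N E => ∃ T : Finset (Fin N), T.card < k ∧
      (Reg s κ E ∧ Reg s' (s / 4) E ∧ LargeCut (η * N) (δ * N) ⌊η / 2 * N⌋₊ T E)) := by
    refine Rare.of_large N0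
      (fun N => k * (N : ℝ) ^ (k - 1) * (N ^ 2 / (τ * (((2 : ℝ) ^ (-a)) ^ N)⁻¹ / 2)))
      (2 * k / τ * C) (fun N _ => ?_) (fun N M hN hN1 hM hMc => ?_)
    · have h1 := mul_le_mul_of_nonneg_left (hpow N) (by positivity : 0 ≤ 2 * k / τ)
      refine le_trans (le_of_eq ?_) h1
      rw [pow_add, pow_add]
      field_simp
    · have hNR : max (8 / η) (max (1 / s') (2 / s)) ≤ N := hN0.trans (by exact_mod_cast hN)
      simp only [max_le_iff, div_le_iff₀ hη0, div_le_iff₀ hs', div_le_iff₀ hs] at hNR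
      obtain ⟨h8, h1, h2⟩ := hNR
      have hN' : (0 : ℝ) < N := by exact_mod_cast hN1
      set r : ℕ := ⌊η / 2 * N⌋₊ with hr
      have hrle : (r : ℝ) ≤ η / 2 * N := Nat.floor_le (by positivity)
      have hrge : η / 4 * N ≤ r := by
        have := Nat.lt_floor_add_one (η / 2 * N)
        rw [← hr] at this
        linarith
      set t : ℕ := ⌊τ * r / 8⌋₊ with ht
      have htle : (t : ℝ) ≤ τ * r / 8 := Nat.floor_le (by positivity)
      have htge : a * N - 1 ≤ t := by
        have h3 := Nat.lt_floor_add_one (τ * r / 8)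
        rw [← ht] at h3
        have h4 := mul_le_mul_of_nonneg_left hrge hτ0.le
        rw [ha]
        linarith
      have h2t : (((2 : ℝ) ^ (-a)) ^ N)⁻¹ / 2 ≤ 2 ^ t := by
        have h3 : (((2 : ℝ) ^ (-a)) ^ N)⁻¹ / 2 = (2 : ℝ) ^ (a * N - 1) := by
          rw [Real.rpow_sub_one (by norm_num), Real.rpow_neg (by norm_num), inv_pow, inv_inv,
            Real.rpow_mul (by norm_num), Real.rpow_natCast]
        rw [h3, ← Real.rpow_natCast]
        exact Real.rpow_le_rpow_of_exponent_le (by norm_num) htge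
      have hMR : (M : ℝ) ≤ (c + 1) * N := by
        have : (M : ℝ) ≤ c * N := by exact_mod_cast hMc
        linarith
      set d : ℝ := ((dicores k1 k2 N M).card : ℝ) with hd
      refine (card_filter_le_sum _ (univ.filter (fun T : Finset (Fin N) => T.card < k))
        (R := fun T E => Reg s κ E ∧ Reg s' (s / 4) E ∧ LargeCut (η * N) (δ * N) r T E)
        (f := fun _ => N ^ 2 / (τ * (((2 : ℝ) ^ (-a)) ^ N)⁻¹ / 2) * d) ?_ ?_).trans ?_
      · rintro E - ⟨T, hT, h⟩
        exact ⟨T, by simpa using hT, h⟩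
      · intro T _
        have h3 := card_largeCut_le (N := N) (M := M) (r := r) (t := t) (s := s) (s' := s') (κ := κ)
          (τ := τ) (b := η * N) (d := δ * N) hk1 hk2 (by linarith) (by linarith) hτ0 ?_ htle
          (by positivity) (by nlinarith) (by nlinarith) ?_ ?_ ?_ T
        · rw [div_mul_eq_mul_div, le_div_iff₀ (by positivity)]
          refine le_trans (mul_le_mul_of_nonneg_left ?_ (by positivity)) h3
          rw [mul_div_assoc]
          exact mul_le_mul_of_nonneg_left h2t hτ0.le
        · have h4 := mul_le_mul_of_nonneg_left hrge hτ0.le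
          have h5 : 0 ≤ τ * r := by positivity
          rw [hκ]
          linarith
        · have : (2 : ℝ) ≤ r := by linarith
          exact_mod_cast this
        · have h4 : (r : ℝ) ≤ N := by nlinarith
          have h5 : r ≤ N := by exact_mod_cast h4
          omega
        · have h4 : (M : ℝ) ^ 2 ≤ ((c + 1) * N) ^ 2 := by gcongr
          have h5 : 4 * τ * ((c + 1) * N) ^ 2 = (η * N) ^ 2 := by
            rw [hτ]; field_simp
          rw [← h5]
          gcongr
      · rw [sum_const, nsmul_eq_mul, ← mul_assoc]
        gcongr
        exact card_filter_card_lt_le hN1 k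
  refine ((hR.or hR').or hL).mono fun N M E _ h => ?_
  obtain ⟨T, hT, h⟩ := h
  by_cases h1 : Reg s κ E
  · by_cases h2 : Reg s' (s / 4) E
    · exact Or.inr ⟨T, hT, h1, h2, h⟩
    · exact Or.inl (Or.inr h2)
  · exact Or.inl (Or.inl h1)

/-! ### Non-`k`-strongly connected dicores are rare -/

lemma Closed.two_le_card {k1 k2 M : ℕ} {T S : Finset (Fin N)} {E : Finset (Fin N × Fin N)}
    {v : Fin N} (hS : Closed T E S) (hE : IsDicore k1 k2 N M E) (hT : T.card < k1) (hv : v ∈ S) :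
    2 ≤ S.card := by
  by_contra hc
  have h1 : S.card = 1 := by
    have := card_pos.2 ⟨v, hv⟩
    omega
  obtain ⟨w, rfl⟩ := card_eq_one.1 h1
  obtain rfl : v = w := by simpa using hv
  have h2 : (E.filter (fun e => e.2 = v)).card ≤ T.card := by
    refine card_le_card_of_injOn Prod.fst (fun e he => ?_) fun e he f hf h => ?_
    · simp only [coe_filter, Set.mem_ofPred_eq] at he
      by_contra heT
      have h3 := hS.2 e he.1 (by simp [he.2]) heT
      exact hE.2.1 e he.1 ((mem_singleton.1 h3).trans he.2.symm)
    · simp only [coe_filter, Set.mem_ofPred_eq] at he hf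
      exact Prod.ext h (he.2.trans hf.2.symm)
  have := (hE.2.2 v).1
  omega

lemma Closed.compl {T S : Finset (Fin N)} {E : Finset (Fin N × Fin N)} (hS : Closed T E S) :
    Closed T (rev E) ((univ \ T) \ S) := by
  refine ⟨disjoint_left.2 fun w hw => ?_, fun e he h1 h2 => ?_⟩
  · simp only [mem_sdiff] at hw
    exact hw.1.2
  · simp only [mem_sdiff, mem_univ, true_and] at h1 ⊢
    exact ⟨h2, fun h3 => h1.2 (hS.2 e.swap (mem_rev.1 he) h3 h1.1)⟩

theorem rare_not_kStronglyConnected (k1 k2 c : ℕ) (hk1 : 2 ≤ k1) (hk2 : 2 ≤ k2) :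
    Rare k1 k2 c (min k1 k2 - 1) (fun _ E => ¬ KStronglyConnected (min k1 k2) E) := by
  set k := min k1 k2 with hk
  have hk2' : 2 ≤ k := le_min hk1 hk2
  obtain ⟨δ₁, hδ₁, hI₁, hII₁⟩ := exists_rare_small_cut k1 k2 c k hk2' (min_le_left _ _)
    (min_le_right _ _)
  obtain ⟨δ₂, hδ₂, hI₂, hII₂⟩ := exists_rare_small_cut k2 k1 c k hk2' (min_le_right _ _)
    (min_le_left _ _)
  set δ := min δ₁ δ₂ with hδ
  obtain ⟨η, hη, hηδ, hIII⟩ := exists_rare_largeCut k1 k2 c k (k - 1) hk1 hk2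
    (lt_min hδ₁ hδ₂)
  have hsmall : Rare k1 k2 c (k - 1) (fun N _ => N ≤ k) := by
    refine Rare.of_large (k + 1) (fun _ => 0) 0 (fun _ _ => by simp) fun N M hN _ _ _ => ?_
    simp [show ¬ N ≤ k by omega]
  refine ((((hI₁.or (hII₁ η hη)).or (hI₂.or (hII₂ η hη)).reverse).or hIII).or hsmall).mono
    fun N M E hE hnot => ?_
  by_contra hcon
  simp only [not_or] at hcon
  obtain ⟨⟨⟨⟨h1, h2⟩, h3, h4⟩, h5⟩, h6⟩ := hcon
  refine hnot ⟨by omega, fun T hT u v hu hv => ?_⟩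
  by_contra hpath
  have hδ₁N : δ * N ≤ δ₁ * N := by gcongr; exact min_le_left _ _
  have hδ₂N : δ * N ≤ δ₂ * N := by gcongr; exact min_le_right _ _
  have hηN : η * N ≤ δ * N := by
    have : η ≤ δ := by linarith
    gcongr
  have hfloor : ((⌊η / 2 * N⌋₊ : ℕ) : ℝ) ≤ η / 2 * N := Nat.floor_le (by positivity)
  have hS : Closed T E (anc T E v) := closed_anc
  have huS : u ∈ (univ \ T) \ anc T E v := by simp [anc, hu, hpath]
  have hSδ : δ * N < (anc T E v).card := by
    by_contra hc
    exact h1 ⟨T, _, hT, hS.two_le_card hE (hT.trans_le (min_le_left _ _)) (mem_anc_self hv),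
      (not_lt.1 hc).trans hδ₁N, hS.ext_eq_zero⟩
  have hSδ' : δ * N < ((univ \ T) \ anc T E v).card := by
    by_contra hc
    exact h3 ⟨T, _, hT, hS.compl.two_le_card (isDicore_rev hE)
      (hT.trans_le (min_le_right _ _)) huS, (not_lt.1 hc).trans hδ₂N, hS.compl.ext_eq_zero⟩
  refine h5 ⟨T, hT, ⟨_, _, hS, hS.compl, disjoint_sdiff, by linarith, by linarith⟩,
    fun C hC hC' => ?_, fun C hC hC' => ?_⟩
  · by_contra hc
    have h7 : (ext E C (C ∪ T) : ℝ) ≤ ⌊η / 2 * N⌋₊ := by exact_mod_cast not_lt.1 hc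
    exact h2 ⟨T, C, hT, hC, hC'.trans hδ₁N, h7.trans hfloor⟩
  · by_contra hc
    have h7 : (ext (rev E) C (C ∪ T) : ℝ) ≤ ⌊η / 2 * N⌋₊ := by exact_mod_cast not_lt.1 hc
    exact h4 ⟨T, C, hT, hC, hC'.trans hδ₂N, h7.trans hfloor⟩

lemma natCard_isDicore (k1 k2 N M : ℕ) :
    Nat.card {E : Finset (Fin N × Fin N) // IsDicore k1 k2 N M E} = (dicores k1 k2 N M).card := by
  rw [Nat.card_eq_fintype_card, Fintype.card_subtype]
  rfl

lemma natCard_isDicore_and (k1 k2 N M : ℕ) (P : Finset (Fin N × Fin N) → Prop) :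
    Nat.card {E : Finset (Fin N × Fin N) // IsDicore k1 k2 N M E ∧ P E} =
      ((dicores k1 k2 N M).filter P).card := by
  rw [Nat.card_eq_fintype_card, Fintype.card_subtype, dicores, filter_filter]

end Dicore

theorem k_strongly_connected_dicore_count
    (k1 k2 : ℕ) (hk1 : 2 ≤ k1) (hk2 : 2 ≤ k2) (ε C1 : ℝ) (hε : 0 < ε)
    (hC1 : ((max k1 k2 : ℕ) : ℝ) + ε < C1) :
    ∃ C : ℝ, 0 < C ∧ ∀ N M : ℕ, 0 < N → 0 < M →
      (((max k1 k2 : ℕ) : ℝ) + ε) * N ≤ M → (M : ℝ) ≤ C1 * N →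
      (Nat.card {E : Finset (Fin N × Fin N) //
          IsDicore k1 k2 N M E ∧ ¬ KStronglyConnected (min k1 k2) E} : ℝ) ≤
        C * (Nat.card {E : Finset (Fin N × Fin N) // IsDicore k1 k2 N M E} : ℝ) /
          (N : ℝ) ^ (min k1 k2 - 1) := by
  obtain ⟨C, hC, h⟩ := Dicore.rare_not_kStronglyConnected k1 k2 ⌈C1⌉₊ hk1 hk2
  refine ⟨C, hC, fun N M hN _ h1 h2 => ?_⟩
  have hN' : (0 : ℝ) < N := by exact_mod_cast hN
  rw [Dicore.natCard_isDicore, Dicore.natCard_isDicore_and, le_div_iff₀ (by positivity)]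
  refine h N M hN ?_ ?_
  · have h3 : (2 : ℝ) ≤ (max k1 k2 : ℕ) := by exact_mod_cast hk1.trans (le_max_left _ _)
    have h4 : (2 : ℝ) * N ≤ M := by nlinarith
    exact_mod_cast h4
  · have h3 : (M : ℝ) ≤ ⌈C1⌉₊ * N := h2.trans (by gcongr; exact Nat.le_ceil _)
    exact_mod_cast h3
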